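/- arXiv:0812.4002 — 5 statements merged into one kernel-verified Lean document; each statement's English description precedes it below -/
import Mathlib

section
/- Let p ≥ 1 be an integer and let θ ∈ ℝ be such that cos(pθ) ≠ 0 and sin(θ − (2l−1)π/(2p)) ≠ 0 for all 1 ≤ l ≤ p. Then ∑_{l=1}^{p} cot(θ − (2l−1)π/(2p)) = −p·tan(pθ). -/
open Real Finset

/-!
Splitting `1 - w ^ n` over the `n`-th roots of unity, with `w = exp (2 * x * I)`, gives
`∏ k < n, 2 * sin (x + k * π / n) = 2 * sin (n * x)`, whose logarithmic derivative is
`∑ k < n, cot (x + k * π / n) = n * cot (n * x)`. At `n = p` and `x = π / (2 * p) - θ` the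
arguments on the left are the negatives of `θ - (2 * l - 1) * π / (2 * p)` with `l = k + 1`, and
`cot (n * x) = cot (π / 2 - p * θ) = tan (p * θ)`.
-/

lemma prod_one_sub_pow_mul_eq_one_sub_pow {R : Type*} [CommRing R] [IsDomain R] {n : ℕ} {ζ : R}
    (hζ : IsPrimitiveRoot ζ n) (hn : n ≠ 0) (w : R) :
    ∏ k ∈ range n, (1 - ζ ^ k * w) = 1 - w ^ n := by
  simpa [Polynomial.eval_prod] using
    (congrArg (Polynomial.eval 1) (X_pow_sub_C_eq_prod hζ (Nat.pos_of_ne_zero hn) rfl)).symm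

lemma sum_range_div_two_sub_add_mul_div {K : Type*} [Field K] [CharZero K] {n : ℕ} (hn : n ≠ 0)
    (c x : K) : ∑ k ∈ range n, (c / 2 - (x + k * c / n)) = c / 2 - n * x := by
  have hgauss : (∑ k ∈ range n, (k : K)) * 2 = n * (n - 1) := by
    simpa only [Nat.cast_mul, Nat.cast_sum, Nat.cast_ofNat, Nat.cast_pred (Nat.pos_of_ne_zero hn)]
      using congrArg (Nat.cast (R := K)) (sum_range_id_mul_two n)
  have hn' : (n : K) ≠ 0 := Nat.cast_ne_zero.2 hn
  simp only [sum_sub_distrib, sum_add_distrib, sum_const, card_range, nsmul_eq_mul, ← sum_div,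
    ← sum_mul]
  field_simp
  linear_combination -c * hgauss

lemma two_mul_csin_eq_cexp_mul_one_sub_cexp (z : ℂ) :
    2 * Complex.sin z =
      Complex.exp ((π / 2 - z) * Complex.I) * (1 - Complex.exp (2 * z * Complex.I)) := by
  have hexp : Complex.exp ((π / 2 - z) * Complex.I) = Complex.I * Complex.exp (-z * Complex.I) := by
    rw [sub_eq_add_neg, add_mul, Complex.exp_add, Complex.exp_pi_div_two_mul_I]
  rw [Complex.two_sin, hexp, mul_assoc, mul_sub, mul_one, ← Complex.exp_add]
  ring_nf

theorem prod_two_mul_csin_add_mul_pi_div {n : ℕ} (hn : n ≠ 0) (x : ℂ) :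
    ∏ k ∈ range n, (2 * Complex.sin (x + k * π / n)) = 2 * Complex.sin (n * x) := by
  have hpow (k : ℕ) : Complex.exp (2 * (x + k * π / n) * Complex.I) =
      Complex.exp (2 * π * Complex.I / n) ^ k * Complex.exp (2 * x * Complex.I) := by
    rw [← Complex.exp_nat_mul, ← Complex.exp_add]
    ring_nf
  calc ∏ k ∈ range n, (2 * Complex.sin (x + k * π / n))
    _ = Complex.exp ((∑ k ∈ range n, ((π : ℂ) / 2 - (x + k * π / n))) * Complex.I) *
        ∏ k ∈ range n,
          (1 - Complex.exp (2 * π * Complex.I / n) ^ k * Complex.exp (2 * x * Complex.I)) := by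
      simp only [two_mul_csin_eq_cexp_mul_one_sub_cexp, prod_mul_distrib, hpow, sum_mul,
        Complex.exp_sum]
    _ = Complex.exp ((π / 2 - n * x) * Complex.I) *
        (1 - Complex.exp (2 * (n * x) * Complex.I)) := by
      rw [sum_range_div_two_sub_add_mul_div hn,
        prod_one_sub_pow_mul_eq_one_sub_pow (Complex.isPrimitiveRoot_exp n hn) hn,
        ← Complex.exp_nat_mul]
      ring_nf
    _ = 2 * Complex.sin (n * x) := (two_mul_csin_eq_cexp_mul_one_sub_cexp _).symm

lemma logDeriv_two_mul_csin_comp {g : ℂ → ℂ} {x : ℂ} (hg : DifferentiableAt ℂ g x) :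
    logDeriv (fun y ↦ 2 * Complex.sin (g y)) x = Complex.cot (g x) * deriv g x := by
  rw [logDeriv_const_mul x 2 two_ne_zero, ← Complex.logDeriv_sin]
  exact logDeriv_comp Complex.differentiableAt_sin hg

theorem sum_ccot_add_mul_pi_div {n : ℕ} {x : ℂ} (hx : Complex.sin (n * x) ≠ 0) :
    ∑ k ∈ range n, Complex.cot (x + k * π / n) = n * Complex.cot (n * x) := by
  have hn : n ≠ 0 := by
    rintro rfl
    simp at hx
  have hfactor : ∀ k ∈ range n, 2 * Complex.sin (x + k * π / n) ≠ 0 := by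
    rw [← prod_ne_zero_iff, prod_two_mul_csin_add_mul_pi_div hn]
    exact mul_ne_zero two_ne_zero hx
  calc ∑ k ∈ range n, Complex.cot (x + k * π / n)
    _ = ∑ k ∈ range n, logDeriv (fun y : ℂ ↦ 2 * Complex.sin (y + k * π / n)) x := by
      refine sum_congr rfl fun k _ ↦ ?_
      rw [logDeriv_two_mul_csin_comp (by fun_prop)]
      simp
    _ = logDeriv (fun y : ℂ ↦ ∏ k ∈ range n, (2 * Complex.sin (y + k * π / n))) x :=
      (logDeriv_prod hfactor fun k _ ↦ by fun_prop).symm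
    _ = logDeriv (fun y : ℂ ↦ 2 * Complex.sin (n * y)) x := by
      simp only [prod_two_mul_csin_add_mul_pi_div hn]
    _ = n * Complex.cot (n * x) := by
      rw [logDeriv_two_mul_csin_comp (by fun_prop)]
      simp [mul_comm]

theorem sum_cot_add_mul_pi_div {n : ℕ} {x : ℝ} (hx : sin (n * x) ≠ 0) :
    ∑ k ∈ range n, cot (x + k * π / n) = n * cot (n * x) := by
  have hx' : Complex.sin (n * x) ≠ 0 := by exact_mod_cast hx
  exact_mod_cast sum_ccot_add_mul_pi_div hx'

lemma cot_neg (x : ℝ) : cot (-x) = -cot x := by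
  rw [← tan_inv_eq_cot, tan_neg, inv_neg, tan_inv_eq_cot]

lemma cot_pi_div_two_sub (x : ℝ) : cot (π / 2 - x) = tan x := by
  rw [← tan_inv_eq_cot, tan_pi_div_two_sub, inv_inv]

/-- For an integer `p ≥ 1` and `θ ∈ ℝ` with `cos(pθ) ≠ 0` and
`sin(θ − (2l−1)π/(2p)) ≠ 0` for all `1 ≤ l ≤ p`,
`∑_{l=1}^{p} cot(θ − (2l−1)π/(2p)) = −p·tan(pθ)`. -/
theorem stmt_4 (p : ℕ) (hp : 1 ≤ p) (θ : ℝ) (h1 : cos (p * θ) ≠ 0)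
    (h2 : ∀ l ∈ Finset.Icc 1 p, sin (θ - (2 * (l : ℝ) - 1) * π / (2 * p)) ≠ 0) :
    ∑ l ∈ Finset.Icc 1 p, Real.cot (θ - (2 * (l : ℝ) - 1) * π / (2 * p))
      = -(p : ℝ) * Real.tan (p * θ) := by
  have hp0 : (p : ℝ) ≠ 0 := Nat.cast_ne_zero.2 (Nat.one_le_iff_ne_zero.1 hp)
  have hmul : (p : ℝ) * (π / (2 * p) - θ) = π / 2 - p * θ := by field_simp
  have hsin : sin (p * (π / (2 * p) - θ)) ≠ 0 := by rwa [hmul, sin_pi_div_two_sub]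
  calc ∑ l ∈ Icc 1 p, cot (θ - (2 * (l : ℝ) - 1) * π / (2 * p))
    _ = ∑ k ∈ range p, cot (θ - (2 * ((k + 1 : ℕ) : ℝ) - 1) * π / (2 * p)) := by
      rw [range_eq_Ico, sum_Ico_add' (fun l : ℕ ↦ cot (θ - (2 * (l : ℝ) - 1) * π / (2 * p))),
        zero_add, Ico_add_one_right_eq_Icc]
    _ = ∑ k ∈ range p, -cot (π / (2 * p) - θ + k * π / p) := by
      refine sum_congr rfl fun k _ ↦ ?_
      rw [← cot_neg]
      congr 1
      push_cast
      field_simp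
      ring
    _ = -(p : ℝ) * tan (p * θ) := by
      rw [sum_neg_distrib, sum_cot_add_mul_pi_div hsin, hmul, cot_pi_div_two_sub, neg_mul]
end

section
/- Let k₀, k₁ ≥ 0 and let (c_j)_{j≥0} be a sequence of real numbers with |c_j| ≤ C·R^j for some constants C, R > 0. Then for every t > 0 the series u(t,φ) = ∑_{j=0}^{∞} c_j e^{−2j(j+k₀+k₁)t} P_j^{(k₀−1/2,k₁−1/2)}(cos 2φ) converges absolutely, locally uniformly on (0,∞)×(0,π/2) together with its term-by-term derivatives, and u satisfies the heat-type equation ∂_t u(t,φ) = (1/2)∂²_φ u(t,φ) + (k₀ cot φ − k₁ tan φ) ∂_φ u(t,φ) for all t > 0 and φ ∈ (0, π/2). -/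
open Real Finset Filter

/-- The Jacobi polynomial
`P_j^{(α,β)}(x) = ∑_{s=0}^{j} [Γ(j+α+1)/(Γ(s+α+1)(j−s)!)]·[Γ(j+β+1)/(Γ(j−s+β+1)s!)]
  ((x−1)/2)^s ((x+1)/2)^{j−s}`. -/
noncomputable def jacobiPoly (α β : ℝ) (j : ℕ) (x : ℝ) : ℝ :=
  ∑ s ∈ Finset.range (j + 1),
    (Real.Gamma ((j : ℝ) + α + 1) / (Real.Gamma ((s : ℝ) + α + 1) * (Nat.factorial (j - s)))) *
    (Real.Gamma ((j : ℝ) + β + 1) / (Real.Gamma ((j : ℝ) - s + β + 1) * (Nat.factorial s))) *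
    ((x - 1) / 2) ^ s * ((x + 1) / 2) ^ (j - s)

/-!
In the variable `y = (x - 1) / 2` the derivative of a Jacobi polynomial of degree `j` is a multiple
of the one of degree `j - 1` with both parameters raised by one, and a first-order operator leads
back; composing the two gives the Jacobi differential equation. With `x = cos 2φ`, that is
`y = -sin² φ`, it becomes the heat equation for each term of the series.
The same relation makes `P_j`, `P_j'` and `P_j''` grow at most geometrically in `j` on `[-1, 1]`,
whereas `exp (-2j(j + k₀ + k₁)t)` decays faster than any geometric sequence, so the series and its
derivatives are dominated by convergent numerical series.
-/

section GeomBounded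

variable {Y : Type*} {a b : ℕ → Y → ℝ}

/-- A sequence of real functions that grows at most geometrically in the index, uniformly in the
argument. The constants may have any sign, so that no positivity has to be carried around. -/
def GeomBounded (a : ℕ → Y → ℝ) : Prop :=
  ∃ A B : ℝ, ∀ j y, |a j y| ≤ A * B ^ j

theorem GeomBounded.exists_nonneg (ha : GeomBounded a) :
    ∃ A B : ℝ, 0 ≤ A ∧ 0 ≤ B ∧ ∀ j y, |a j y| ≤ A * B ^ j := by
  obtain ⟨A, B, h⟩ := ha
  refine ⟨|A|, |B|, abs_nonneg A, abs_nonneg B, fun j y => (h j y).trans ?_⟩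
  simpa only [abs_mul, abs_pow] using le_abs_self (A * B ^ j)

theorem GeomBounded.add (ha : GeomBounded a) (hb : GeomBounded b) :
    GeomBounded fun j y => a j y + b j y := by
  obtain ⟨A, B, hA, hB, ha⟩ := ha.exists_nonneg
  obtain ⟨A', B', hA', hB', hb⟩ := hb.exists_nonneg
  refine ⟨A + A', B + B', fun j y => ?_⟩
  calc |a j y + b j y| ≤ A * B ^ j + A' * B' ^ j :=
        (abs_add_le _ _).trans (add_le_add (ha j y) (hb j y))
    _ ≤ A * (B + B') ^ j + A' * (B + B') ^ j := by gcongr <;> linarith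
    _ = (A + A') * (B + B') ^ j := by ring

theorem GeomBounded.mul (ha : GeomBounded a) (hb : GeomBounded b) :
    GeomBounded fun j y => a j y * b j y := by
  obtain ⟨A, B, hA, hB, ha⟩ := ha.exists_nonneg
  obtain ⟨A', B', -, -, hb⟩ := hb.exists_nonneg
  refine ⟨A * A', B * B', fun j y => ?_⟩
  calc |a j y * b j y| ≤ (A * B ^ j) * (A' * B' ^ j) := by
        rw [abs_mul]
        exact mul_le_mul (ha j y) (hb j y) (abs_nonneg _) (by positivity)
    _ = A * A' * (B * B') ^ j := by ring

theorem geomBounded_of_abs_le {f : Y → ℝ} {M : ℝ} (hf : ∀ y, |f y| ≤ M) :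
    GeomBounded fun _ y => f y :=
  ⟨M, 1, fun j y => by simpa only [one_pow, mul_one] using hf y⟩

theorem geomBounded_const (r : ℝ) : GeomBounded fun (_ : ℕ) (_ : Y) => r :=
  geomBounded_of_abs_le fun _ => le_rfl

theorem geomBounded_natCast : GeomBounded fun j (_ : Y) => (j : ℝ) :=
  ⟨1, 2, fun j _ => by
    rw [one_mul, Nat.abs_cast]
    exact_mod_cast j.lt_two_pow_self.le⟩

theorem GeomBounded.of_succ (h₀ : ∀ y, a 0 y = 0) (h : GeomBounded fun j => a (j + 1)) :
    GeomBounded a := by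
  obtain ⟨A, B, hA, hB, h⟩ := h.exists_nonneg
  refine ⟨A, B + 1, fun j y => ?_⟩
  cases j with
  | zero => simpa only [h₀, abs_zero, pow_zero, mul_one] using hA
  | succ j =>
    calc |a (j + 1) y| ≤ A * B ^ j := h j y
      _ ≤ A * ((B + 1) ^ j * (B + 1)) := by
        gcongr
        exact (pow_le_pow_left₀ hB (by linarith) j).trans
          (le_mul_of_one_le_right (by positivity) (by linarith))
      _ = A * (B + 1) ^ (j + 1) := by rw [pow_succ]

end GeomBounded

section ExpSeries

open Topology

variable {Y : Type*} {ν : ℕ → ℝ} {a : ℕ → Y → ℝ}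

theorem summable_exp_neg_mul_mul_pow (hν : Tendsto (fun j => ν j / j) atTop atTop) (B : ℝ) {t : ℝ}
    (ht : 0 < t) : Summable fun j => exp (-ν j * t) * B ^ j := by
  have hroot : Tendsto (fun j : ℕ => exp (-(ν j / j * t)) * |B|) atTop (𝓝 (0 * |B|)) :=
    (tendsto_exp_neg_atTop_nhds_zero.comp (hν.atTop_mul_const ht)).mul_const _
  rw [zero_mul] at hroot
  refine Summable.of_norm_bounded_eventually_nat summable_geometric_two ?_
  filter_upwards [hroot.eventually_lt_const one_half_pos, eventually_ne_atTop 0] with j hj hj₀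
  calc ‖exp (-ν j * t) * B ^ j‖ = (exp (-(ν j / j * t)) * |B|) ^ j := by
        rw [norm_mul, norm_pow, Real.norm_eq_abs, Real.norm_eq_abs, abs_exp, mul_pow,
          ← Real.exp_nat_mul]
        field_simp
    _ ≤ (1 / 2) ^ j := pow_le_pow_left₀ (by positivity) hj.le j

/-- The `j`-th term of the generalized Dirichlet series in `t` with exponents `ν j` and
coefficients `a j y`. -/
noncomputable def expTerm (ν : ℕ → ℝ) (a : ℕ → Y → ℝ) (j : ℕ) (x : ℝ × Y) : ℝ :=
  exp (-ν j * x.1) * a j x.2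

/-- The generalized Dirichlet series with terms `expTerm ν a j`, for solving evolution equations by
expansion in eigenfunctions. -/
noncomputable def expSeries (ν : ℕ → ℝ) (a : ℕ → Y → ℝ) (x : ℝ × Y) : ℝ :=
  ∑' j, expTerm ν a j x

theorem GeomBounded.exists_summable_bound (ha : GeomBounded a)
    (hν : Tendsto (fun j => ν j / j) atTop atTop) {t : ℝ} (ht : 0 < t) :
    ∃ w : ℕ → ℝ, Summable w ∧
      ∀ j, ∀ x : ℝ × Y, x.1 ∈ Set.Ioo (t / 2) (2 * t) → ‖expTerm ν a j x‖ ≤ w j := by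
  obtain ⟨A, B, ha⟩ := ha
  refine ⟨fun j => A * (exp (-ν j * (t / 2)) * B ^ j + exp (-ν j * (2 * t)) * B ^ j),
    ((summable_exp_neg_mul_mul_pow hν B (by positivity)).add
      (summable_exp_neg_mul_mul_pow hν B (by positivity))).mul_left A, fun j x hx => ?_⟩
  -- Only finitely many `ν j` can be negative, but for those the right end point is needed.
  have hexp : exp (-ν j * x.1) ≤ exp (-ν j * (t / 2)) + exp (-ν j * (2 * t)) := by
    rcases le_total 0 (ν j) with hj | hj
    · exact le_add_of_le_of_nonneg (exp_le_exp.mpr (by nlinarith [hx.1])) (exp_pos _).le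
    · exact le_add_of_nonneg_of_le (exp_pos _).le (exp_le_exp.mpr (by nlinarith [hx.2]))
  calc ‖expTerm ν a j x‖ = exp (-ν j * x.1) * |a j x.2| := by
        rw [expTerm, norm_mul, Real.norm_eq_abs, Real.norm_eq_abs, abs_exp]
    _ ≤ (exp (-ν j * (t / 2)) + exp (-ν j * (2 * t))) * (A * B ^ j) :=
        mul_le_mul hexp (ha j x.2) (abs_nonneg _) (by positivity)
    _ = A * (exp (-ν j * (t / 2)) * B ^ j + exp (-ν j * (2 * t)) * B ^ j) := by ring

theorem mem_Ioo_half_two_mul {t : ℝ} (ht : 0 < t) : t ∈ Set.Ioo (t / 2) (2 * t) :=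
  ⟨by linarith, by linarith⟩

theorem summable_abs_expTerm (hν : Tendsto (fun j => ν j / j) atTop atTop) (ha : GeomBounded a)
    {x : ℝ × Y} (hx : 0 < x.1) : Summable fun j => |expTerm ν a j x| := by
  obtain ⟨w, hw, hb⟩ := ha.exists_summable_bound hν hx
  exact hw.of_nonneg_of_le (fun _ => abs_nonneg _) fun j => hb j x (mem_Ioo_half_two_mul hx)

theorem tendstoLocallyUniformlyOn_expSeries [TopologicalSpace Y]
    (hν : Tendsto (fun j => ν j / j) atTop atTop) (ha : GeomBounded a) :
    TendstoLocallyUniformlyOn (fun N x => ∑ j ∈ range N, expTerm ν a j x) (expSeries ν a) atTop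
      {x | 0 < x.1} := by
  intro U hU x hx
  obtain ⟨w, hw, hb⟩ := ha.exists_summable_bound hν hx
  have hmem : Prod.fst ⁻¹' Set.Ioo (x.1 / 2) (2 * x.1) ∈ 𝓝 x :=
    (isOpen_Ioo.preimage continuous_fst).mem_nhds (mem_Ioo_half_two_mul hx)
  exact ⟨_, mem_nhdsWithin_of_mem_nhds hmem, tendstoUniformlyOn_tsum_nat hw hb U hU⟩

theorem hasDerivAt_expTerm_fst (ν : ℕ → ℝ) (a : ℕ → Y → ℝ) (j : ℕ) (t : ℝ) (y : Y) :
    HasDerivAt (fun s => expTerm ν a j (s, y)) (expTerm ν (fun j y => -ν j * a j y) j (t, y)) t :=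
  ((((hasDerivAt_id' t).const_mul (-ν j)).exp).mul_const (a j y)).congr_deriv <| by
    rw [expTerm]
    ring

theorem hasDerivAt_expSeries_fst (hν : Tendsto (fun j => ν j / j) atTop atTop)
    (ha : GeomBounded a) (ha' : GeomBounded fun j y => -ν j * a j y) {t : ℝ} (ht : 0 < t) (y : Y) :
    HasDerivAt (fun s => expSeries ν a (s, y)) (expSeries ν (fun j y => -ν j * a j y) (t, y))
      t := by
  obtain ⟨w, hw, hb⟩ := ha'.exists_summable_bound hν ht
  have hmem := mem_Ioo_half_two_mul ht
  exact hasDerivAt_tsum_of_isPreconnected hw isOpen_Ioo isPreconnected_Ioo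
    (fun j s _ => hasDerivAt_expTerm_fst ν a j s y) (fun j s hs => hb j (s, y) hs) hmem
    (summable_abs_expTerm hν ha (x := (t, y)) ht).of_abs hmem

theorem tendstoLocallyUniformlyOn_deriv_fst_expSeries [TopologicalSpace Y]
    (hν : Tendsto (fun j => ν j / j) atTop atTop) (ha : GeomBounded a)
    (ha' : GeomBounded fun j y => -ν j * a j y) :
    TendstoLocallyUniformlyOn
      (fun (N : ℕ) (x : ℝ × Y) => ∑ j ∈ range N, deriv (fun t => expTerm ν a j (t, x.2)) x.1)
      (fun x : ℝ × Y => deriv (fun t => expSeries ν a (t, x.2)) x.1) atTop {x | 0 < x.1} := by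
  simp only [(hasDerivAt_expTerm_fst _ _ _ _ _).deriv]
  exact (tendstoLocallyUniformlyOn_expSeries hν ha').congr_right fun x hx =>
    (hasDerivAt_expSeries_fst hν ha ha' hx x.2).deriv.symm

end ExpSeries

section ExpSeriesDerivSnd

variable {ν : ℕ → ℝ} {a : ℕ → ℝ → ℝ}

theorem hasDerivAt_expTerm_snd {j : ℕ} (ha : Differentiable ℝ (a j)) (t y : ℝ) :
    HasDerivAt (fun z => expTerm ν a j (t, z)) (expTerm ν (fun j => deriv (a j)) j (t, y)) y :=
  (ha y).hasDerivAt.const_mul (exp (-ν j * t))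

theorem hasDerivAt_expSeries_snd (hν : Tendsto (fun j => ν j / j) atTop atTop)
    (had : ∀ j, Differentiable ℝ (a j)) (ha : GeomBounded a)
    (ha' : GeomBounded fun j => deriv (a j)) {t : ℝ} (ht : 0 < t) (y : ℝ) :
    HasDerivAt (fun z => expSeries ν a (t, z)) (expSeries ν (fun j => deriv (a j)) (t, y)) y := by
  obtain ⟨w, hw, hb⟩ := ha'.exists_summable_bound hν ht
  exact hasDerivAt_tsum hw (fun j z => hasDerivAt_expTerm_snd (had j) t z)
    (fun j z => hb j (t, z) (mem_Ioo_half_two_mul ht))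
    (summable_abs_expTerm hν ha (x := (t, y)) ht).of_abs y

theorem deriv_expSeries_snd (hν : Tendsto (fun j => ν j / j) atTop atTop)
    (had : ∀ j, Differentiable ℝ (a j)) (ha : GeomBounded a)
    (ha' : GeomBounded fun j => deriv (a j)) {t : ℝ} (ht : 0 < t) :
    deriv (fun z => expSeries ν a (t, z)) = fun z => expSeries ν (fun j => deriv (a j)) (t, z) :=
  funext fun y => (hasDerivAt_expSeries_snd hν had ha ha' ht y).deriv

theorem tendstoLocallyUniformlyOn_deriv_snd_expSeries
    (hν : Tendsto (fun j => ν j / j) atTop atTop) (had : ∀ j, Differentiable ℝ (a j))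
    (ha : GeomBounded a) (ha' : GeomBounded fun j => deriv (a j)) :
    TendstoLocallyUniformlyOn
      (fun (N : ℕ) (x : ℝ × ℝ) => ∑ j ∈ range N, deriv (fun y => expTerm ν a j (x.1, y)) x.2)
      (fun x : ℝ × ℝ => deriv (fun y => expSeries ν a (x.1, y)) x.2) atTop {x | 0 < x.1} := by
  simp only [(hasDerivAt_expTerm_snd (had _) _ _).deriv]
  exact (tendstoLocallyUniformlyOn_expSeries hν ha').congr_right fun x hx =>
    (hasDerivAt_expSeries_snd hν had ha ha' hx x.2).deriv.symm

/-- A sequence of twice differentiable functions on the line that grows, together with its first two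
derivatives, at most geometrically in the index. -/
structure TwiceGeomBounded (a : ℕ → ℝ → ℝ) : Prop where
  differentiable (j : ℕ) : Differentiable ℝ (a j)
  differentiable_deriv (j : ℕ) : Differentiable ℝ (deriv (a j))
  geomBounded : GeomBounded a
  geomBounded_deriv : GeomBounded fun j => deriv (a j)
  geomBounded_deriv_deriv : GeomBounded fun j => deriv (deriv (a j))

theorem TwiceGeomBounded.deriv_const_mul (ha : TwiceGeomBounded a) (c : ℕ → ℝ) (j : ℕ) :
    deriv (fun y => c j * a j y) = fun y => c j * deriv (a j) y :=
  funext fun y => _root_.deriv_const_mul _ (ha.differentiable j y)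

theorem TwiceGeomBounded.deriv_deriv_const_mul (ha : TwiceGeomBounded a) (c : ℕ → ℝ) (j : ℕ) :
    deriv (deriv fun y => c j * a j y) = fun y => c j * deriv (deriv (a j)) y := by
  rw [ha.deriv_const_mul]
  exact funext fun y => _root_.deriv_const_mul _ (ha.differentiable_deriv j y)

theorem TwiceGeomBounded.const_mul (ha : TwiceGeomBounded a) {c : ℕ → ℝ}
    (hc : GeomBounded fun j (_ : ℝ) => c j) : TwiceGeomBounded fun j y => c j * a j y where
  differentiable j := (ha.differentiable j).const_mul _
  differentiable_deriv j := by
    rw [ha.deriv_const_mul]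
    exact (ha.differentiable_deriv j).const_mul _
  geomBounded := hc.mul ha.geomBounded
  geomBounded_deriv := by
    simp only [ha.deriv_const_mul]
    exact hc.mul ha.geomBounded_deriv
  geomBounded_deriv_deriv := by
    simp only [ha.deriv_deriv_const_mul]
    exact hc.mul ha.geomBounded_deriv_deriv

theorem tendstoLocallyUniformlyOn_deriv_deriv_snd_expSeries
    (hν : Tendsto (fun j => ν j / j) atTop atTop) (ha : TwiceGeomBounded a) :
    TendstoLocallyUniformlyOn
      (fun (N : ℕ) (x : ℝ × ℝ) => ∑ j ∈ range N, deriv (deriv fun y => expTerm ν a j (x.1, y)) x.2)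
      (fun x : ℝ × ℝ => deriv (deriv fun y => expSeries ν a (x.1, y)) x.2) atTop {x | 0 < x.1} := by
  have hterm (j : ℕ) (t : ℝ) : (deriv fun y => expTerm ν a j (t, y)) =
      fun y => expTerm ν (fun j => deriv (a j)) j (t, y) :=
    funext fun y => (hasDerivAt_expTerm_snd (ha.differentiable j) t y).deriv
  simp only [hterm]
  refine (tendstoLocallyUniformlyOn_deriv_snd_expSeries hν ha.differentiable_deriv
    ha.geomBounded_deriv ha.geomBounded_deriv_deriv).congr_right fun x hx => ?_
  rw [deriv_expSeries_snd hν ha.differentiable ha.geomBounded ha.geomBounded_deriv hx]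

theorem deriv_fst_expSeries_eq_of_eigenfunction (hν : Tendsto (fun j => ν j / j) atTop atTop)
    (ha : TwiceGeomBounded a) (hνa : GeomBounded fun j y => -ν j * a j y) {t y p q : ℝ}
    (ht : 0 < t) (heigen : ∀ j, -ν j * a j y = p * deriv (deriv (a j)) y + q * deriv (a j) y) :
    deriv (fun s => expSeries ν a (s, y)) t =
      p * deriv (deriv fun z => expSeries ν a (t, z)) y +
        q * deriv (fun z => expSeries ν a (t, z)) y := by
  have hsum {b : ℕ → ℝ → ℝ} (hb : GeomBounded b) : Summable fun j => expTerm ν b j (t, y) :=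
    (summable_abs_expTerm hν hb (x := (t, y)) ht).of_abs
  rw [(hasDerivAt_expSeries_fst hν ha.geomBounded hνa ht y).deriv,
    deriv_expSeries_snd hν ha.differentiable ha.geomBounded ha.geomBounded_deriv ht,
    (hasDerivAt_expSeries_snd hν ha.differentiable_deriv ha.geomBounded_deriv
      ha.geomBounded_deriv_deriv ht y).deriv]
  simp only [expSeries]
  rw [← tsum_mul_left, ← tsum_mul_left,
    ← ((hsum ha.geomBounded_deriv_deriv).mul_left p).tsum_add
      ((hsum ha.geomBounded_deriv).mul_left q)]
  refine tsum_congr fun j => ?_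
  rw [expTerm, heigen, expTerm, expTerm]
  ring

end ExpSeriesDerivSnd

section Multichoose

theorem succ_mul_multichoose_succ {R : Type*} [CommRing R] [BinomialRing R] (x : R) (m : ℕ) :
    ((m : R) + 1) * Ring.multichoose x (m + 1) = x * Ring.multichoose (x + 1) m := by
  have : IsAddTorsionFree R := BinomialRing.toIsAddTorsionFree
  refine (nsmul_right_inj m.factorial_ne_zero).mp ?_
  calc m.factorial • (((m : R) + 1) * Ring.multichoose x (m + 1))
      = (m + 1).factorial • Ring.multichoose x (m + 1) := by
        simp only [nsmul_eq_mul, Nat.factorial_succ]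
        push_cast
        ring
    _ = x * (m.factorial • Ring.multichoose (x + 1) m) := by
        simp only [Ring.factorial_nsmul_multichoose_eq_ascPochhammer, ascPochhammer_succ_left,
          Polynomial.smeval_X_mul, Polynomial.smeval_comp, Polynomial.smeval_add,
          Polynomial.smeval_X, Polynomial.smeval_one, pow_one, pow_zero, one_smul]
    _ = m.factorial • (x * Ring.multichoose (x + 1) m) := (mul_smul_comm _ _ _)

theorem gamma_add_natCast_div_eq_multichoose {x : ℝ} (hx : ∀ n : ℕ, x ≠ -n) (m : ℕ) :
    Gamma (x + m) / (Gamma x * m.factorial) = Ring.multichoose x m := by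
  induction m generalizing x with
  | zero => simp [Gamma_ne_zero hx]
  | succ m ih =>
    have hx₀ : x ≠ 0 := by simpa using hx 0
    have hx₁ : ∀ n : ℕ, x + 1 ≠ -n := fun n h => hx (n + 1) (by push_cast; linarith)
    have hrec := succ_mul_multichoose_succ x m
    rw [← ih hx₁, Gamma_add_one hx₀] at hrec
    have hΓ := Gamma_ne_zero hx
    rw [← mul_right_inj' (Nat.cast_add_one_ne_zero (R := ℝ) m), hrec, Nat.factorial_succ]
    push_cast
    rw [add_right_comm x 1, add_assoc x]
    field_simp

theorem abs_multichoose_le_choose {x : ℝ} {n : ℕ} (hx : |x| ≤ n) (m : ℕ) :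
    |Ring.multichoose x m| ≤ (n + m).choose m := by
  induction m generalizing x n with
  | zero => simp
  | succ m ih =>
    have hx₁ : |x + 1| ≤ (n + 1 : ℕ) := by
      push_cast
      exact (abs_add_le x 1).trans (by rw [abs_one]; linarith)
    have hchoose : ((n + (m + 1)).choose (m + 1) : ℝ) * (m + 1) =
        (n + (m + 1)).choose m * (n + 1) := by
      have h := Nat.choose_succ_right_eq (n + (m + 1)) m
      rw [show n + (m + 1) - m = n + 1 by omega] at h
      exact_mod_cast h
    have hm : (0 : ℝ) < m + 1 := by positivity
    refine le_of_mul_le_mul_left ?_ hm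
    calc ((m : ℝ) + 1) * |Ring.multichoose x (m + 1)| = |x| * |Ring.multichoose (x + 1) m| := by
          rw [← abs_mul, ← succ_mul_multichoose_succ, abs_mul, abs_of_pos hm]
      _ ≤ (n + 1) * (n + 1 + m).choose m :=
          mul_le_mul (by linarith) (ih hx₁) (abs_nonneg _) (by positivity)
      _ = (m + 1) * (n + (m + 1)).choose (m + 1) := by
          rw [mul_comm ((m : ℝ) + 1), hchoose, add_right_comm n 1 m, add_assoc, mul_comm]

end Multichoose

section ShiftedJacobi

open Polynomial

variable {R : Type*} [CommRing R] [BinomialRing R] (α β : R)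

/-- The coefficient `(s+m+α choose m) (s+m+β choose s)` of a Jacobi polynomial, as a product of
multichoose numbers so that it makes sense in every binomial ring. -/
noncomputable def jacobiCoeff (s m : ℕ) : R :=
  Ring.multichoose (s + α + 1) m * Ring.multichoose (m + β + 1) s

/-- The Jacobi polynomial `P_j^{(α,β)}(1 + 2X)`. The substitution removes the denominators. -/
noncomputable def shiftedJacobi (j : ℕ) : R[X] :=
  ∑ p ∈ antidiagonal j, C (jacobiCoeff α β p.1 p.2) * (X ^ p.1 * (X + 1) ^ p.2)

theorem succ_mul_jacobiCoeff_succ_left (s m : ℕ) :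
    ((s : R) + 1) * jacobiCoeff α β (s + 1) m =
      (m + β + 1) * jacobiCoeff (α + 1) (β + 1) s m := by
  have h := succ_mul_multichoose_succ ((m : R) + β + 1) s
  simp only [jacobiCoeff, Nat.cast_add_one, ← add_assoc, add_right_comm _ (1 : R) α]
  linear_combination Ring.multichoose ((s : R) + α + 1 + 1) m * h

theorem succ_mul_jacobiCoeff_succ_right (s m : ℕ) :
    ((m : R) + 1) * jacobiCoeff α β s (m + 1) =
      (s + α + 1) * jacobiCoeff (α + 1) (β + 1) s m := by
  have h := succ_mul_multichoose_succ ((s : R) + α + 1) m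
  simp only [jacobiCoeff, Nat.cast_add_one, ← add_assoc, add_right_comm _ (1 : R) β]
  linear_combination Ring.multichoose ((m : R) + β + 1 + 1) s * h

theorem derivative_shiftedJacobi (j : ℕ) :
    derivative (shiftedJacobi α β j) = ∑ p ∈ antidiagonal j, C (jacobiCoeff α β p.1 p.2) *
      ((p.1 : R[X]) * X ^ (p.1 - 1) * (X + 1) ^ p.2 +
        (p.2 : R[X]) * X ^ p.1 * (X + 1) ^ (p.2 - 1)) := by
  rw [shiftedJacobi, derivative_sum]
  refine sum_congr rfl fun p _ => ?_
  simp only [derivative_mul, derivative_C, derivative_pow, derivative_add,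
    derivative_X, derivative_one, map_natCast, add_zero, mul_one]
  ring

theorem derivative_shiftedJacobi_succ (n : ℕ) :
    derivative (shiftedJacobi α β (n + 1)) =
      C (n + α + β + 2) * shiftedJacobi (α + 1) (β + 1) n := by
  have hcoeff (p : ℕ × ℕ) (hp : p ∈ antidiagonal n) :
      ((p.1 : R) + 1) * jacobiCoeff α β (p.1 + 1) p.2 +
          ((p.2 : R) + 1) * jacobiCoeff α β p.1 (p.2 + 1) =
        (n + α + β + 2) * jacobiCoeff (α + 1) (β + 1) p.1 p.2 := by
    rw [succ_mul_jacobiCoeff_succ_left, succ_mul_jacobiCoeff_succ_right, ← mem_antidiagonal.mp hp]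
    push_cast
    ring
  simp only [derivative_shiftedJacobi, mul_add, sum_add_distrib]
  rw [Nat.sum_antidiagonal_succ, Nat.sum_antidiagonal_succ', shiftedJacobi, mul_sum]
  simp only [Nat.cast_zero, zero_mul, mul_zero, zero_add, Nat.add_sub_cancel, ← sum_add_distrib]
  refine sum_congr rfl fun p hp => ?_
  have h := congrArg C (hcoeff p hp)
  simp only [map_add, map_mul, map_natCast, map_one] at h ⊢
  push_cast
  linear_combination X ^ p.1 * (X + 1) ^ p.2 * h

theorem mul_natCast_mul_pow_sub_one {A : Type*} [CommSemiring A] (x : A) (n : ℕ) :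
    x * ((n : A) * x ^ (n - 1)) = n * x ^ n := by
  cases n with
  | zero => simp
  | succ n => rw [Nat.add_sub_cancel, pow_succ', mul_left_comm]

theorem shiftedJacobi_raising (n : ℕ) :
    X * (X + 1) * derivative (shiftedJacobi (α + 1) (β + 1) n) +
        (C (α + 1) * (X + 1) + C (β + 1) * X) * shiftedJacobi (α + 1) (β + 1) n =
      ((n : R[X]) + 1) * shiftedJacobi α β (n + 1) := by
  have hsplit : ((n : R[X]) + 1) * shiftedJacobi α β (n + 1) =
      ∑ p ∈ antidiagonal (n + 1),
          (p.1 : R[X]) * C (jacobiCoeff α β p.1 p.2) * (X ^ p.1 * (X + 1) ^ p.2) +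
        ∑ p ∈ antidiagonal (n + 1),
          (p.2 : R[X]) * C (jacobiCoeff α β p.1 p.2) * (X ^ p.1 * (X + 1) ^ p.2) := by
    rw [shiftedJacobi, mul_sum, ← sum_add_distrib]
    refine sum_congr rfl fun p hp => ?_
    have h : (n : R[X]) + 1 = p.1 + p.2 := by
      rw [← Nat.cast_add_one, ← mem_antidiagonal.mp hp, Nat.cast_add]
    rw [h]
    ring
  rw [hsplit, Nat.sum_antidiagonal_succ, Nat.sum_antidiagonal_succ', derivative_shiftedJacobi,
    shiftedJacobi, mul_sum, mul_sum]
  simp only [Nat.cast_zero, zero_mul, zero_add, ← sum_add_distrib]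
  refine sum_congr rfl fun p _ => ?_
  have hleft := congrArg C (succ_mul_jacobiCoeff_succ_left α β p.1 p.2)
  have hright := congrArg C (succ_mul_jacobiCoeff_succ_right α β p.1 p.2)
  simp only [map_add, map_mul, map_natCast, map_one] at hleft hright ⊢
  push_cast
  linear_combination C (jacobiCoeff (α + 1) (β + 1) p.1 p.2) *
      ((X + 1) * (X + 1) ^ p.2 * mul_natCast_mul_pow_sub_one (X : R[X]) p.1 +
        X * X ^ p.1 * mul_natCast_mul_pow_sub_one (X + 1 : R[X]) p.2) -
    X ^ (p.1 + 1) * (X + 1) ^ p.2 * hleft - X ^ p.1 * (X + 1) ^ (p.2 + 1) * hright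

theorem shiftedJacobi_zero : shiftedJacobi α β 0 = 1 := by
  simp [shiftedJacobi, jacobiCoeff]

theorem shiftedJacobi_differential_equation (j : ℕ) :
    X * (X + 1) * derivative (derivative (shiftedJacobi α β j)) +
        (C (α + 1) * (X + 1) + C (β + 1) * X) * derivative (shiftedJacobi α β j) =
      C (j * (j + α + β + 1)) * shiftedJacobi α β j := by
  cases j with
  | zero => simp [shiftedJacobi_zero]
  | succ n =>
    have h := shiftedJacobi_raising α β n
    rw [derivative_shiftedJacobi_succ, derivative_C_mul]
    simp only [map_add, map_mul, map_natCast, map_one, map_ofNat, Nat.cast_add_one] at h ⊢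
    linear_combination (n + C α + C β + 2) * h

end ShiftedJacobi

section JacobiGrowth

open Polynomial

variable {Y : Type*} {g : Y → ℝ}

theorem abs_jacobiCoeff_le {α β : ℝ} {K : ℕ} (hα : |α| ≤ K) (hβ : |β| ≤ K) (s m : ℕ) :
    |jacobiCoeff α β s m| ≤ 4 ^ (K + 1) * 4 ^ (s + m) := by
  have hfactor {γ : ℝ} (hγ : |γ| ≤ K) (s m : ℕ) :
      |Ring.multichoose ((s : ℝ) + γ + 1) m| ≤ 2 ^ (s + m + (K + 1)) := by
    have hx : |(s : ℝ) + γ + 1| ≤ (s + K + 1 : ℕ) := by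
      obtain ⟨h₁, h₂⟩ := abs_le.mp hγ
      push_cast
      exact abs_le.mpr ⟨by linarith [s.cast_nonneg (α := ℝ)], by linarith⟩
    refine (abs_multichoose_le_choose hx m).trans ?_
    rw [show s + m + (K + 1) = s + K + 1 + m by omega]
    exact_mod_cast Nat.choose_le_two_pow _ _
  calc |jacobiCoeff α β s m| ≤ 2 ^ (s + m + (K + 1)) * 2 ^ (m + s + (K + 1)) := by
        rw [jacobiCoeff, abs_mul]
        exact mul_le_mul (hfactor hα s m) (hfactor hβ m s) (abs_nonneg _) (by positivity)
    _ = 4 ^ (K + 1) * 4 ^ (s + m) := by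
        rw [add_comm m s, ← mul_pow, pow_add, mul_comm]
        norm_num

theorem geomBounded_eval_shiftedJacobi (α β : ℝ) (hg : ∀ y, g y ∈ Set.Icc (-1) 0) :
    GeomBounded fun j y => (shiftedJacobi α β j).eval (g y) := by
  obtain ⟨K, hK⟩ := exists_nat_ge (max |α| |β|)
  refine ⟨4 ^ (K + 1), 8, fun j y => ?_⟩
  obtain ⟨hg₁, hg₀⟩ := hg y
  have hmonomial (s m : ℕ) : |g y ^ s * (g y + 1) ^ m| ≤ 1 := by
    rw [abs_mul, abs_pow, abs_pow]
    exact mul_le_one₀ (pow_le_one₀ (abs_nonneg _) (abs_le.mpr ⟨hg₁, by linarith⟩)) (by positivity)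
      (pow_le_one₀ (abs_nonneg _) (abs_le.mpr ⟨by linarith, by linarith⟩))
  have hterm : ∀ p ∈ antidiagonal j,
      |jacobiCoeff α β p.1 p.2 * (g y ^ p.1 * (g y + 1) ^ p.2)| ≤ 4 ^ (K + 1) * 4 ^ j := by
    intro p hp
    rw [abs_mul, ← mem_antidiagonal.mp hp]
    exact (mul_le_of_le_one_right (abs_nonneg _) (hmonomial p.1 p.2)).trans
      (abs_jacobiCoeff_le (le_of_max_le_left hK) (le_of_max_le_right hK) p.1 p.2)
  calc |(shiftedJacobi α β j).eval (g y)|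
      = |∑ p ∈ antidiagonal j, jacobiCoeff α β p.1 p.2 * (g y ^ p.1 * (g y + 1) ^ p.2)| := by
        simp [shiftedJacobi, eval_finsetSum]
    _ ≤ ∑ _ ∈ antidiagonal j, 4 ^ (K + 1) * 4 ^ j :=
        (abs_sum_le_sum_abs _ _).trans (sum_le_sum hterm)
    _ = 4 ^ (K + 1) * (4 ^ j * (j + 1 : ℕ)) := by
        rw [sum_const, Nat.card_antidiagonal, nsmul_eq_mul]
        ring
    _ ≤ 4 ^ (K + 1) * (4 ^ j * 2 ^ j) := by
        gcongr
        exact_mod_cast j.lt_two_pow_self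
    _ = 4 ^ (K + 1) * 8 ^ j := by
        rw [← mul_pow]
        norm_num

theorem geomBounded_eval_iterate_derivative_shiftedJacobi (α β : ℝ)
    (hg : ∀ y, g y ∈ Set.Icc (-1) 0) (n : ℕ) :
    GeomBounded fun j y => (derivative^[n] (shiftedJacobi α β j)).eval (g y) := by
  induction n generalizing α β with
  | zero => exact geomBounded_eval_shiftedJacobi α β hg
  | succ n ih =>
    refine GeomBounded.of_succ (fun y => ?_) ?_
    · simp [shiftedJacobi_zero]
    · simp only [Function.iterate_succ_apply, derivative_shiftedJacobi_succ,
        iterate_derivative_C_mul, eval_C_mul, add_assoc]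
      exact (geomBounded_natCast.add (geomBounded_const _)).mul (ih (α + 1) (β + 1))

end JacobiGrowth

section AngularJacobi

open Polynomial

theorem jacobiPoly_eq_eval_shiftedJacobi {α β : ℝ} (hα : ∀ n : ℕ, α + 1 ≠ -n)
    (hβ : ∀ n : ℕ, β + 1 ≠ -n) (j : ℕ) (x : ℝ) :
    jacobiPoly α β j x = (shiftedJacobi α β j).eval ((x - 1) / 2) := by
  have hshift {γ : ℝ} (hγ : ∀ n : ℕ, γ + 1 ≠ -n) (s n : ℕ) : (s : ℝ) + γ + 1 ≠ -n := fun h =>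
    hγ (s + n) (by push_cast; linarith)
  rw [jacobiPoly, shiftedJacobi, eval_finsetSum,
    Nat.sum_antidiagonal_eq_sum_range_succ_mk]
  refine sum_congr rfl fun s hs => ?_
  obtain ⟨m, rfl⟩ := Nat.exists_eq_add_of_le (mem_range_succ_iff.mp hs)
  simp only [Nat.add_sub_cancel_left, eval_mul, eval_C, eval_pow, eval_X, eval_add, eval_one,
    jacobiCoeff, ← gamma_add_natCast_div_eq_multichoose (hshift hα s),
    ← gamma_add_natCast_div_eq_multichoose (hshift hβ m)]
  push_cast
  ring_nf

/-- The Jacobi polynomial in the angular variable, `P_j^{(α,β)}(cos 2φ)`, written in terms of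
`(cos 2φ - 1) / 2 = -sin² φ`. -/
noncomputable def angularJacobi (α β : ℝ) (j : ℕ) (φ : ℝ) : ℝ :=
  (shiftedJacobi α β j).eval (-sin φ ^ 2)

theorem jacobiPoly_cos_two_mul {α β : ℝ} (hα : ∀ n : ℕ, α + 1 ≠ -n) (hβ : ∀ n : ℕ, β + 1 ≠ -n)
    (j : ℕ) (φ : ℝ) : jacobiPoly α β j (cos (2 * φ)) = angularJacobi α β j φ := by
  rw [jacobiPoly_eq_eval_shiftedJacobi hα hβ, angularJacobi, cos_two_mul, cos_sq']
  ring_nf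

theorem neg_sin_sq_mem_Icc (φ : ℝ) : -sin φ ^ 2 ∈ Set.Icc (-1) 0 :=
  ⟨neg_le_neg (sin_sq_le_one φ), neg_nonpos.mpr (sq_nonneg _)⟩

theorem hasDerivAt_eval_neg_sin_sq (p : ℝ[X]) (φ : ℝ) :
    HasDerivAt (fun ψ => p.eval (-sin ψ ^ 2))
      (p.derivative.eval (-sin φ ^ 2) * (-2 * sin φ * cos φ)) φ :=
  ((p.hasDerivAt _).comp φ ((hasDerivAt_sin φ).pow 2).neg).congr_deriv <| by
    simp only [Pi.neg_apply, Pi.pow_apply]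
    ring

theorem differentiable_angularJacobi (α β : ℝ) (j : ℕ) : Differentiable ℝ (angularJacobi α β j) :=
  fun φ => (hasDerivAt_eval_neg_sin_sq _ φ).differentiableAt

theorem deriv_angularJacobi (α β : ℝ) (j : ℕ) :
    deriv (angularJacobi α β j) = fun φ =>
      (derivative (shiftedJacobi α β j)).eval (-sin φ ^ 2) * (-2 * sin φ * cos φ) :=
  funext fun φ => (hasDerivAt_eval_neg_sin_sq _ φ).deriv

theorem hasDerivAt_deriv_angularJacobi (α β : ℝ) (j : ℕ) (φ : ℝ) :
    HasDerivAt (deriv (angularJacobi α β j))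
      ((derivative (derivative (shiftedJacobi α β j))).eval (-sin φ ^ 2) *
          (4 * sin φ ^ 2 * cos φ ^ 2) +
        (derivative (shiftedJacobi α β j)).eval (-sin φ ^ 2) * (2 * sin φ ^ 2 - 2 * cos φ ^ 2))
      φ := by
  rw [deriv_angularJacobi]
  exact ((hasDerivAt_eval_neg_sin_sq (derivative (shiftedJacobi α β j)) φ).mul
    (((hasDerivAt_sin φ).const_mul (-2)).mul (hasDerivAt_cos φ))).congr_deriv <| by
      simp only [Pi.mul_apply]
      ring

theorem geomBounded_deriv_angularJacobi (α β : ℝ) :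
    GeomBounded fun j => deriv (angularJacobi α β j) := by
  simp only [deriv_angularJacobi]
  refine (geomBounded_eval_iterate_derivative_shiftedJacobi α β neg_sin_sq_mem_Icc 1).mul
    (geomBounded_of_abs_le (M := 2) fun φ => abs_le.mpr ⟨?_, ?_⟩) <;>
  nlinarith [sin_sq_add_cos_sq φ, sq_nonneg (sin φ + cos φ), sq_nonneg (sin φ - cos φ)]

theorem geomBounded_deriv_deriv_angularJacobi (α β : ℝ) :
    GeomBounded fun j => deriv (deriv (angularJacobi α β j)) := by
  have hderiv (j : ℕ) := funext fun φ => (hasDerivAt_deriv_angularJacobi α β j φ).deriv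
  simp only [hderiv]
  refine ((geomBounded_eval_iterate_derivative_shiftedJacobi α β neg_sin_sq_mem_Icc 2).mul
      (geomBounded_of_abs_le (M := 4) fun φ => abs_le.mpr ⟨?_, ?_⟩)).add
    ((geomBounded_eval_iterate_derivative_shiftedJacobi α β neg_sin_sq_mem_Icc 1).mul
      (geomBounded_of_abs_le (M := 2) fun φ => abs_le.mpr ⟨?_, ?_⟩)) <;>
  nlinarith [sin_sq_add_cos_sq φ, sq_nonneg (sin φ), sq_nonneg (cos φ),
    mul_nonneg (sq_nonneg (sin φ)) (sq_nonneg (cos φ))]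

theorem twiceGeomBounded_angularJacobi (α β : ℝ) : TwiceGeomBounded (angularJacobi α β) where
  differentiable := differentiable_angularJacobi α β
  differentiable_deriv j φ := (hasDerivAt_deriv_angularJacobi α β j φ).differentiableAt
  geomBounded := geomBounded_eval_shiftedJacobi α β neg_sin_sq_mem_Icc
  geomBounded_deriv := geomBounded_deriv_angularJacobi α β
  geomBounded_deriv_deriv := geomBounded_deriv_deriv_angularJacobi α β

theorem angularJacobi_differential_equation (k₀ k₁ : ℝ) (j : ℕ) {φ : ℝ} (hs : sin φ ≠ 0)
    (hc : cos φ ≠ 0) :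
    -(2 * j * (j + k₀ + k₁)) * angularJacobi (k₀ - 1 / 2) (k₁ - 1 / 2) j φ =
      1 / 2 * deriv (deriv (angularJacobi (k₀ - 1 / 2) (k₁ - 1 / 2) j)) φ +
        (k₀ * cot φ - k₁ * tan φ) * deriv (angularJacobi (k₀ - 1 / 2) (k₁ - 1 / 2) j) φ := by
  have hode := congrArg (eval (-sin φ ^ 2))
    (shiftedJacobi_differential_equation (k₀ - 1 / 2) (k₁ - 1 / 2) j)
  simp only [eval_add, eval_mul, eval_X, eval_one, eval_C] at hode
  rw [show -sin φ ^ 2 + 1 = cos φ ^ 2 by linarith [sin_sq_add_cos_sq φ]] at hode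
  have hcot : cot φ * sin φ = cos φ := by rw [cot_eq_cos_div_sin, div_mul_cancel₀ _ hs]
  have htan : tan φ * cos φ = sin φ := tan_mul_cos hc
  rw [(hasDerivAt_deriv_angularJacobi _ _ j φ).deriv, deriv_angularJacobi, angularJacobi]
  set d := eval (-sin φ ^ 2) (derivative (shiftedJacobi (k₀ - 1 / 2) (k₁ - 1 / 2) j))
  linear_combination 2 * hode + 2 * k₀ * d * cos φ * hcot - 2 * k₁ * d * sin φ * htan

end AngularJacobi

theorem tendsto_quadratic_div_atTop (r : ℝ) :
    Tendsto (fun j : ℕ => 2 * (j : ℝ) * (j + r) / j) atTop atTop := by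
  refine ((tendsto_atTop_add_const_right _ r tendsto_natCast_atTop_atTop).const_mul_atTop
    (zero_lt_two' ℝ)).congr' ?_
  filter_upwards [eventually_ne_atTop 0] with j hj
  field_simp

theorem geomBounded_neg_quadratic {Y : Type*} (r : ℝ) :
    GeomBounded fun j (_ : Y) => -(2 * (j : ℝ) * (j + r)) := by
  simpa only [neg_mul] using ((geomBounded_const (-2)).mul geomBounded_natCast).mul
    (geomBounded_natCast.add (geomBounded_const r))

theorem stmt_8_general {k₀ k₁ : ℝ} (hk₀ : ∀ n : ℕ, k₀ + 1 / 2 ≠ -n)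
    (hk₁ : ∀ n : ℕ, k₁ + 1 / 2 ≠ -n) {c : ℕ → ℝ} {C R : ℝ} (hc : ∀ j, |c j| ≤ C * R ^ j)
    {T : ℕ → ℝ × ℝ → ℝ}
    (hT : ∀ (j : ℕ) (x : ℝ × ℝ), T j x = c j * exp (-2 * j * (j + k₀ + k₁) * x.1) *
      jacobiPoly (k₀ - 1 / 2) (k₁ - 1 / 2) j (cos (2 * x.2)))
    {u : ℝ × ℝ → ℝ} (hu : ∀ x, u x = ∑' j, T j x) {S : Set (ℝ × ℝ)} (hS : S ⊆ {x | 0 < x.1}) :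
    (∀ x ∈ S, Summable fun j => |T j x|)
    ∧ TendstoLocallyUniformlyOn (fun N x => ∑ j ∈ range N, T j x) u atTop S
    ∧ TendstoLocallyUniformlyOn
        (fun N x => ∑ j ∈ range N, deriv (fun t => T j (t, x.2)) x.1)
        (fun x => deriv (fun t => u (t, x.2)) x.1) atTop S
    ∧ TendstoLocallyUniformlyOn
        (fun N x => ∑ j ∈ range N, deriv (fun φ => T j (x.1, φ)) x.2)
        (fun x => deriv (fun φ => u (x.1, φ)) x.2) atTop S
    ∧ TendstoLocallyUniformlyOn
        (fun N x => ∑ j ∈ range N, deriv (deriv (fun φ => T j (x.1, φ))) x.2)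
        (fun x => deriv (deriv (fun φ => u (x.1, φ))) x.2) atTop S
    ∧ ∀ t φ : ℝ, 0 < t → sin φ ≠ 0 → cos φ ≠ 0 →
        deriv (fun s => u (s, φ)) t
          = (1 / 2) * deriv (deriv (fun ψ => u (t, ψ))) φ
            + (k₀ * cot φ - k₁ * tan φ) * deriv (fun ψ => u (t, ψ)) φ := by
  obtain rfl : T = expTerm (fun j => 2 * j * (j + (k₀ + k₁)))
      fun j φ => c j * angularJacobi (k₀ - 1 / 2) (k₁ - 1 / 2) j φ := by
    funext j x
    rw [hT, jacobiPoly_cos_two_mul (fun n h => hk₀ n (by linarith))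
      (fun n h => hk₁ n (by linarith)), expTerm,
      show -2 * j * (j + k₀ + k₁) * x.1 = -(2 * j * (j + (k₀ + k₁))) * x.1 by ring]
    ring
  obtain rfl : u = expSeries _ _ := funext hu
  have hν := tendsto_quadratic_div_atTop (k₀ + k₁)
  have hΦ := twiceGeomBounded_angularJacobi (k₀ - 1 / 2) (k₁ - 1 / 2)
  have ha := hΦ.const_mul ⟨C, R, fun j _ => hc j⟩
  have hνa := (geomBounded_neg_quadratic (k₀ + k₁)).mul ha.geomBounded
  refine ⟨fun x hx => summable_abs_expTerm hν ha.geomBounded (hS hx),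
    (tendstoLocallyUniformlyOn_expSeries hν ha.geomBounded).mono hS,
    (tendstoLocallyUniformlyOn_deriv_fst_expSeries hν ha.geomBounded hνa).mono hS,
    (tendstoLocallyUniformlyOn_deriv_snd_expSeries hν ha.differentiable ha.geomBounded
      ha.geomBounded_deriv).mono hS,
    (tendstoLocallyUniformlyOn_deriv_deriv_snd_expSeries hν ha).mono hS,
    fun t φ ht hs hc => deriv_fst_expSeries_eq_of_eigenfunction hν ha hνa ht fun j => ?_⟩
  rw [hΦ.deriv_deriv_const_mul, hΦ.deriv_const_mul]
  linear_combination c j * angularJacobi_differential_equation k₀ k₁ j hs hc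

/-- Let `k₀, k₁ ≥ 0` and `|c_j| ≤ C·R^j`. Then the spectral series
`u(t,φ) = ∑_j c_j e^{−2j(j+k₀+k₁)t} P_j^{(k₀−1/2,k₁−1/2)}(cos 2φ)` converges absolutely on
`(0,∞)×(0,π/2)`, locally uniformly together with its term-by-term `t`-, `φ`- and
second `φ`-derivatives, and `u` solves the heat-type equation
`∂_t u = (1/2)∂²_φ u + (k₀ cot φ − k₁ tan φ)∂_φ u`. -/
theorem stmt_8 (k₀ k₁ : ℝ) (hk₀ : 0 ≤ k₀) (hk₁ : 0 ≤ k₁)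
    (c : ℕ → ℝ) (C R : ℝ) (hC : 0 < C) (hR : 0 < R) (hc : ∀ j, |c j| ≤ C * R ^ j)
    (T : ℕ → ℝ × ℝ → ℝ)
    (hT : ∀ (j : ℕ) (x : ℝ × ℝ), T j x
      = c j * Real.exp (-2 * j * (j + k₀ + k₁) * x.1)
          * jacobiPoly (k₀ - 1 / 2) (k₁ - 1 / 2) j (Real.cos (2 * x.2)))
    (u : ℝ × ℝ → ℝ) (hu : ∀ x, u x = ∑' j, T j x)
    (S : Set (ℝ × ℝ)) (hS : S = Set.Ioi (0 : ℝ) ×ˢ Set.Ioo (0 : ℝ) (π / 2)) :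
    (∀ x ∈ S, Summable fun j => |T j x|)
    ∧ TendstoLocallyUniformlyOn
        (fun N x => ∑ j ∈ Finset.range N, T j x) u atTop S
    ∧ TendstoLocallyUniformlyOn
        (fun N x => ∑ j ∈ Finset.range N, deriv (fun t => T j (t, x.2)) x.1)
        (fun x => deriv (fun t => u (t, x.2)) x.1) atTop S
    ∧ TendstoLocallyUniformlyOn
        (fun N x => ∑ j ∈ Finset.range N, deriv (fun φ => T j (x.1, φ)) x.2)
        (fun x => deriv (fun φ => u (x.1, φ)) x.2) atTop S
    ∧ TendstoLocallyUniformlyOn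
        (fun N x => ∑ j ∈ Finset.range N, deriv (deriv (fun φ => T j (x.1, φ))) x.2)
        (fun x => deriv (deriv (fun φ => u (x.1, φ))) x.2) atTop S
    ∧ ∀ t φ : ℝ, 0 < t → 0 < φ → φ < π / 2 →
        deriv (fun s => u (s, φ)) t
          = (1 / 2) * deriv (deriv (fun ψ => u (t, ψ))) φ
            + (k₀ * Real.cot φ - k₁ * Real.tan φ) * deriv (fun ψ => u (t, ψ)) φ := by
  obtain ⟨habs, hu₀, hut, huφ, huφφ, hpde⟩ := stmt_8_general
    (fun n h => by linarith [n.cast_nonneg (α := ℝ)])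
    (fun n h => by linarith [n.cast_nonneg (α := ℝ)]) hc hT hu (S := S) (fun x hx => (hS ▸ hx).1)
  exact ⟨habs, hu₀, hut, huφ, huφφ, fun t φ ht h₀ h₁ => hpde t φ ht
    (sin_pos_of_pos_of_lt_pi h₀ (by linarith)).ne' (cos_pos_of_mem_Ioo ⟨by linarith, h₁⟩).ne'⟩
end

section
/- Let n ≥ 1 be an integer, a ≥ 0, and φ, θ ∈ ℝ. Then ∑_{l=0}^{n−1} [ exp(a·cos(φ − θ − 2πl/n)) + exp(a·cos(φ + θ − 2πl/n)) ] = 2n·I₀(a) + 4n·∑_{j=1}^{∞} I_{jn}(a) cos(jnφ) cos(jnθ), where the series on the right converges absolutely. Equivalently, with x = ρ(cos φ, sin φ), y = r(cos θ, sin θ) and a = ρr, the sum ∑_{w ∈ D₂(n)} e^{⟨x, w y⟩} over the 2n elements of the dihedral group (n rotations by 2πl/n and n reflections) equals the right-hand side; this is the generalized Bessel function of the dihedral system I₂(n) with multiplicity k ≡ 0, underlying the heat kernel of planar Brownian motion reflected at the boundary of the wedge of angle π/n. -/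
open Real Finset

/-- The modified Bessel function `I_ν(x) = ∑_{q=0}^∞ (x/2)^{2q+ν}/(q! Γ(ν+q+1))`. -/
noncomputable def modBesselI (ν x : ℝ) : ℝ :=
  ∑' q : ℕ, (x / 2) ^ (2 * (q : ℝ) + ν) / (Nat.factorial q * Real.Gamma (ν + q + 1))

/-!
With `z = e^{it}` one has `a cos t = a/2 (z + z⁻¹)`, so the summands are values of the generating
function `exp (a/2 (z + z⁻¹)) = ∑_{m ∈ ℤ} I_{|m|}(a) zᵐ`, which is the product of two exponential
series collected along the diagonals `p - q = m`. Summing over the rotates of `z` by the `n`-th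
roots of unity keeps `n` times the terms with `n ∣ m`. The angles `φ - θ` and `φ + θ` then combine
by `cos (u - v) + cos (u + v) = 2 cos u cos v`, and `m ↦ -m` pairs the remaining terms.
-/

theorem hasSum_nat_add_one_of_even {G : Type*} [AddCommGroup G] [TopologicalSpace G]
    [IsTopologicalAddGroup G] {f : ℤ → G} (hf : f.Even) {s : G} (h : HasSum f s) :
    HasSum (fun j : ℕ => 2 • f (j + 1)) (s - f 0) := by
  have hnat : HasSum (fun j : ℕ => 2 • f j) (s + f 0) :=
    h.nat_add_neg.congr_fun fun j => by rw [hf, two_nsmul]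
  simpa [two_nsmul] using (hasSum_nat_add_iff' 1).2 hnat

theorem sum_range_zpow_of_isPrimitiveRoot {K : Type*} [Field K] {ζ : K} {n : ℕ}
    (hζ : IsPrimitiveRoot ζ n) (m : ℤ) :
    ∑ l ∈ range n, (ζ ^ l) ^ m = if (n : ℤ) ∣ m then (n : K) else 0 := by
  have pow_comm (l : ℕ) : (ζ ^ l) ^ m = (ζ ^ m) ^ l := by
    simp only [← zpow_natCast, zpow_comm]
  simp only [pow_comm]
  split_ifs with hm
  · simp [(hζ.zpow_eq_one_iff_dvd m).2 hm]
  · rw [geom_sum_eq (mt (hζ.zpow_eq_one_iff_dvd m).1 hm), ← pow_comm, hζ.pow_eq_one]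
    simp

theorem hasSum_laurent_multisection {K : Type*} [Field K] [TopologicalSpace K] [ContinuousAdd K]
    {ζ : K} {n : ℕ} (hn : n ≠ 0) (hζ : IsPrimitiveRoot ζ n) {c : ℤ → K} {z : K} {F : ℕ → K}
    (hF : ∀ l < n, HasSum (fun m : ℤ => c m * (z * ζ ^ l) ^ m) (F l)) :
    HasSum (fun j : ℤ => n * (c (j * n) * z ^ (j * n))) (∑ l ∈ range n, F l) := by
  have hinj : Function.Injective fun j : ℤ => j * n :=
    mul_left_injective₀ (by exact_mod_cast hn)
  have filtered (m : ℤ) : ∑ l ∈ range n, c m * (z * ζ ^ l) ^ m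
      = if (n : ℤ) ∣ m then n * (c m * z ^ m) else 0 := by
    simp only [mul_zpow, ← mul_assoc, ← mul_sum, sum_range_zpow_of_isPrimitiveRoot hζ]
    split_ifs <;> ring
  have hsum := hasSum_sum (s := range n) fun l hl => hF l (mem_range.1 hl)
  simp only [filtered] at hsum
  have vanish_off_multiples : ∀ m ∉ Set.range fun j : ℤ => j * n,
      (if (n : ℤ) ∣ m then n * (c m * z ^ m) else 0) = 0 :=
    fun m hm => if_neg fun ⟨k, hk⟩ => hm ⟨k, hk ▸ mul_comm k n⟩
  simpa [Function.comp_def] using (hinj.hasSum_iff vanish_off_multiples).2 hsum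

theorem hasSum_prod_exp_add {K : Type*} [NormedField K] [NormedAlgebra ℚ K] [CompleteSpace K]
    (u v : K) :
    HasSum (fun p : ℕ × ℕ => u ^ p.1 / p.1.factorial * (v ^ p.2 / p.2.factorial))
      (NormedSpace.exp (u + v)) := by
  have summable_prod := summable_mul_of_summable_norm
    (NormedSpace.norm_expSeries_div_summable u) (NormedSpace.norm_expSeries_div_summable v)
  have hprod := (NormedSpace.expSeries_div_hasSum_exp u).mul
    (NormedSpace.expSeries_div_hasSum_exp v) summable_prod
  rwa [← NormedSpace.exp_add] at hprod

theorem hasSum_modBesselI_natCast (m : ℕ) (x : ℝ) :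
    HasSum (fun q : ℕ => (x / 2) ^ (q + m) / (q + m).factorial * ((x / 2) ^ q / q.factorial))
      (modBesselI m x) := by
  have summable_diagonal := (hasSum_prod_exp_add (x / 2) (x / 2)).summable.comp_injective
    (i := fun q : ℕ => (q + m, q)) fun _ _ h => (Prod.ext_iff.1 h).2
  convert! summable_diagonal.hasSum using 1
  refine tsum_congr fun q => ?_
  have exponent_cast : 2 * (q : ℝ) + m = ((q + m + q : ℕ) : ℝ) := by push_cast; ring
  have order_cast : (m : ℝ) + q + 1 = ((q + m : ℕ) : ℝ) + 1 := by push_cast; ring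
  rw [exponent_cast, order_cast, rpow_natCast, Gamma_nat_eq_factorial, Function.comp_apply,
    div_mul_div_comm, ← pow_add, mul_comm (q.factorial : ℝ)]

/-- The parametrization of `ℕ × ℕ` by its diagonals, used to collect a double power series in `z`
and `z⁻¹`: `(m, k)` is the `k`-th point `(k + m⁺, k + m⁻)` of the diagonal `p - q = m`. -/
def diagonalsEquiv : ℤ × ℕ ≃ ℕ × ℕ where
  toFun d := (d.2 + d.1.toNat, d.2 + (-d.1).toNat)
  invFun p := ((p.1 : ℤ) - p.2, min p.1 p.2)
  left_inv d := by ext <;> simp; omega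
  right_inv p := by ext <;> simp <;> omega

theorem hasSum_diagonal_modBesselI (x : ℝ) (m : ℤ) :
    HasSum (fun q : ℕ => (x / 2) ^ (q + m.toNat) / (q + m.toNat).factorial
        * ((x / 2) ^ (q + (-m).toNat) / (q + (-m).toNat).factorial))
      (modBesselI |(m : ℝ)| x) := by
  obtain ⟨k, rfl | rfl⟩ := m.eq_nat_or_neg
  · simpa using hasSum_modBesselI_natCast k x
  · simpa [mul_comm] using hasSum_modBesselI_natCast k x

theorem hasSum_modBesselI_mul_zpow (x : ℝ) {z : ℂ} (hz : z ≠ 0) :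
    HasSum (fun m : ℤ => (modBesselI |(m : ℝ)| x : ℂ) * z ^ m)
      (Complex.exp (x / 2 * (z + z⁻¹))) := by
  have hprod := hasSum_prod_exp_add (x / 2 * z) (x / 2 * z⁻¹)
  rw [← mul_add, ← Complex.exp_eq_exp_ℂ, ← diagonalsEquiv.hasSum_iff] at hprod
  have zpow_diagonal (m : ℤ) (q : ℕ) :
      z ^ m = z ^ (q + m.toNat) * z⁻¹ ^ (q + (-m).toNat) := by
    rw [inv_pow, ← zpow_natCast, ← zpow_natCast, ← zpow_neg, ← zpow_add₀ hz]
    congr 1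
    omega
  refine hprod.prod_fiberwise fun m =>
    ((Complex.hasSum_ofReal.2 (hasSum_diagonal_modBesselI x m)).mul_right (z ^ m)).congr_fun
      fun q => ?_
  rw [zpow_diagonal m q]
  simp only [Function.comp_apply, diagonalsEquiv, Equiv.coe_fn_mk, mul_pow]
  push_cast
  ring

theorem exp_half_mul_exp_mul_I_add_inv (a t : ℝ) :
    Complex.exp (a / 2 * (Complex.exp (t * Complex.I) + (Complex.exp (t * Complex.I))⁻¹))
      = (Real.exp (a * Real.cos t) : ℂ) := by
  rw [← Complex.exp_neg, ← neg_mul, ← Complex.two_cos]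
  push_cast
  ring_nf

theorem hasSum_modBesselI_mul_cos_rotations {n : ℕ} (hn : n ≠ 0) (a α : ℝ) :
    HasSum (fun j : ℤ => n * (modBesselI |(j : ℝ) * n| a * Real.cos (j * n * α)))
      (∑ l ∈ range n, Real.exp (a * Real.cos (α - 2 * π * l / n))) := by
  have hζ : IsPrimitiveRoot (Complex.exp (2 * π * Complex.I / n))⁻¹ n :=
    (Complex.isPrimitiveRoot_exp n hn).inv
  have rotate (l : ℕ) : Complex.exp (α * Complex.I) * (Complex.exp (2 * π * Complex.I / n))⁻¹ ^ l
      = Complex.exp ((α - 2 * π * l / n : ℝ) * Complex.I) := by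
    rw [← Complex.exp_neg, ← Complex.exp_nat_mul, ← Complex.exp_add]
    congr 1
    push_cast
    ring
  have hsum := hasSum_laurent_multisection hn hζ fun l _ =>
    hasSum_modBesselI_mul_zpow a (mul_ne_zero (Complex.exp_ne_zero (α * Complex.I))
      (pow_ne_zero l (hζ.ne_zero hn)))
  simp only [rotate, exp_half_mul_exp_mul_I_add_inv, ← Complex.ofReal_sum] at hsum
  convert! Complex.hasSum_re hsum using 2 with j
  have zpow_exp : Complex.exp (α * Complex.I) ^ (j * n : ℤ)
      = Complex.exp ((j * n * α : ℝ) * Complex.I) := by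
    rw [← Complex.exp_int_mul]
    push_cast
    ring_nf
  rw [zpow_exp, ← Complex.ofReal_natCast, Complex.re_ofReal_mul, Complex.re_ofReal_mul,
    Complex.exp_ofReal_mul_I_re]
  push_cast
  rfl

theorem hasSum_modBesselI_mul_cos_mul_cos_dihedral {n : ℕ} (hn : n ≠ 0) (a φ θ : ℝ) :
    HasSum (fun j : ℤ => 2 * n * (modBesselI |(j : ℝ) * n| a
        * Real.cos (j * n * φ) * Real.cos (j * n * θ)))
      (∑ l ∈ range n, (Real.exp (a * Real.cos (φ - θ - 2 * π * l / n))
        + Real.exp (a * Real.cos (φ + θ - 2 * π * l / n)))) := by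
  rw [sum_add_distrib]
  convert! (hasSum_modBesselI_mul_cos_rotations hn a (φ - θ)).add
    (hasSum_modBesselI_mul_cos_rotations hn a (φ + θ)) using 2 with j
  rw [mul_sub, mul_add, Real.cos_sub, Real.cos_add]
  ring

theorem stmt_9_general (n : ℕ) (hn : 1 ≤ n) (a : ℝ) (φ θ : ℝ) :
    (Summable fun j : ℕ =>
      |modBesselI (((j : ℝ) + 1) * n) a * Real.cos (((j : ℝ) + 1) * n * φ)
        * Real.cos (((j : ℝ) + 1) * n * θ)|)
    ∧ ∑ l ∈ Finset.range n,
        (Real.exp (a * Real.cos (φ - θ - 2 * π * l / n))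
          + Real.exp (a * Real.cos (φ + θ - 2 * π * l / n)))
      = 2 * n * modBesselI 0 a
        + 4 * n * ∑' j : ℕ, modBesselI (((j : ℝ) + 1) * n) a
            * Real.cos (((j : ℝ) + 1) * n * φ) * Real.cos (((j : ℝ) + 1) * n * θ) := by
  have hn₀ : n ≠ 0 := Nat.one_le_iff_ne_zero.1 hn
  have even_term : Function.Even fun j : ℤ => 2 * n * (modBesselI |(j : ℝ) * n| a
      * Real.cos (j * n * φ) * Real.cos (j * n * θ)) := fun j => by
    simp only [Int.cast_neg, neg_mul, abs_neg, Real.cos_neg]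
  have term_eq (j : ℕ) : 2 • (2 * n * (modBesselI |((j + 1 : ℤ) : ℝ) * n| a
      * Real.cos ((j + 1 : ℤ) * n * φ) * Real.cos ((j + 1 : ℤ) * n * θ)))
      = 4 * n * (modBesselI (((j : ℝ) + 1) * n) a * Real.cos (((j : ℝ) + 1) * n * φ)
        * Real.cos (((j : ℝ) + 1) * n * θ)) := by
    push_cast
    rw [abs_of_nonneg (by positivity), nsmul_eq_mul]
    push_cast
    ring
  have hsum := hasSum_nat_add_one_of_even even_term
    (hasSum_modBesselI_mul_cos_mul_cos_dihedral hn₀ a φ θ)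
  simp only [term_eq] at hsum
  refine ⟨((summable_mul_left_iff (by positivity)).1 hsum.summable).abs, ?_⟩
  rw [← tsum_mul_left, hsum.tsum_eq]
  simp

/-- For an integer `n ≥ 1`, `a ≥ 0` and `φ, θ ∈ ℝ`,
`∑_{l=0}^{n−1} [e^{a cos(φ−θ−2πl/n)} + e^{a cos(φ+θ−2πl/n)}]
  = 2n I₀(a) + 4n ∑_{j≥1} I_{jn}(a) cos(jnφ) cos(jnθ)`,
the series converging absolutely. With `x = ρ(cos φ, sin φ)`, `y = r(cos θ, sin θ)`,
`a = ρr`, the left-hand side is `∑_{w ∈ D₂(n)} e^{⟨x, wy⟩}`: the generalized Bessel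
function of the dihedral system `I₂(n)` with `k ≡ 0`. -/
theorem stmt_9 (n : ℕ) (hn : 1 ≤ n) (a : ℝ) (ha : 0 ≤ a) (φ θ : ℝ) :
    (Summable fun j : ℕ =>
      |modBesselI (((j : ℝ) + 1) * n) a * Real.cos (((j : ℝ) + 1) * n * φ)
        * Real.cos (((j : ℝ) + 1) * n * θ)|)
    ∧ ∑ l ∈ Finset.range n,
        (Real.exp (a * Real.cos (φ - θ - 2 * π * l / n))
          + Real.exp (a * Real.cos (φ + θ - 2 * π * l / n)))
      = 2 * n * modBesselI 0 a
        + 4 * n * ∑' j : ℕ, modBesselI (((j : ℝ) + 1) * n) a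
            * Real.cos (((j : ℝ) + 1) * n * φ) * Real.cos (((j : ℝ) + 1) * n * θ) :=
  stmt_9_general n hn a φ θ
end

section
/- Let b > −1, ν ∈ ℝ with b + ν > −2, set a = (b+ν)/2, and let ρ > 0. Then the integral ∫_0^∞ e^{−r²/2} I_b(ρ r) r^{ν+1} dr converges and equals 2^{(ν−b)/2} ρ^{b} · [Γ(a+1)/Γ(b+1)] · ₁F₁(a+1; b+1; ρ²/2). -/
open Real MeasureTheory

/-- The confluent hypergeometric function
`₁F₁(a; c; x) = ∑_{q=0}^∞ [(Γ(a+q)/Γ(a))/(Γ(c+q)/Γ(c))] x^q/q!`. -/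
noncomputable def hyp1F1 (a c x : ℝ) : ℝ :=
  ∑' q : ℕ, (Real.Gamma (a + q) / Real.Gamma a) / (Real.Gamma (c + q) / Real.Gamma c)
      * x ^ q / (Nat.factorial q)

/-!
Expand `I_b(ρr)` in powers of `r` and integrate term by term. Since every exponent
`s = 2q + b + ν + 1` exceeds `-1`, each term contributes a multiple of the Gaussian moment
`∫_0^∞ r^s e^{−r²/2} dr = 2^{(s−1)/2} Γ((s+1)/2)`, and the resulting series is the constant
prefactor times that of `₁F₁`. As `r^s e^{−r²/2} ≥ 0`, the `L¹` norm of each term is the absolute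
value of its integral, so the absolute convergence of `₁F₁` gives both integrability and the
interchange.
-/

section TermwiseIntegration

variable {α : Type*} [MeasurableSpace α] {μ : Measure α}

lemma integrable_tsum_of_summable_integral_norm {ι E : Type*} [Countable ι]
    [NormedAddCommGroup E] [CompleteSpace E] {F : ι → α → E}
    (hF : ∀ i, Integrable (F i) μ) (hsum : Summable fun i => ∫ x, ‖F i x‖ ∂μ) :
    Integrable (fun x => ∑' i, F i x) μ := by
  have hL1 : ∑' i, ‖(hF i).toL1 (F i)‖ₑ ≠ ⊤ := by
    rw [tsum_enorm_ne_top_iff_summable_norm]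
    simpa only [L1.norm_of_fun_eq_integral_norm] using hsum
  have hcoe : ∀ᵐ x ∂μ, ∀ i, (hF i).toL1 (F i) x = F i x :=
    ae_all_iff.2 fun i => (hF i).coeFn_toL1
  refine (L1.integrable_coeFn (∑' i, (hF i).toL1 (F i))).congr ?_
  filter_upwards [Lp.coeFn_tsum hL1, hcoe] with x hx hcoe_x
  simp only [hx, hcoe_x]

lemma integral_norm_const_mul_of_nonneg {g : α → ℝ} (hg : 0 ≤ᵐ[μ] g) (c : ℝ) :
    ∫ x, ‖c * g x‖ ∂μ = ‖c * ∫ x, g x ∂μ‖ := by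
  have hnorm : (fun x => ‖c * g x‖) =ᵐ[μ] fun x => ‖c‖ * g x := by
    filter_upwards [hg] with x hx
    rw [norm_mul, norm_of_nonneg hx]
  rw [integral_congr_ae hnorm, integral_const_mul, norm_mul,
    norm_of_nonneg (integral_nonneg_of_ae hg)]

variable {ι : Type*} {c : ι → ℝ} {g : ι → α → ℝ}

lemma summable_integral_norm_const_mul_of_nonneg (hg : ∀ i, 0 ≤ᵐ[μ] g i)
    (hsum : Summable fun i => c i * ∫ x, g i x ∂μ) :
    Summable fun i => ∫ x, ‖c i * g i x‖ ∂μ := by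
  simpa only [integral_norm_const_mul_of_nonneg (hg _)] using hsum.norm

variable [Countable ι]

lemma integrable_tsum_const_mul_of_nonneg (hg : ∀ i, 0 ≤ᵐ[μ] g i)
    (hint : ∀ i, Integrable (g i) μ) (hsum : Summable fun i => c i * ∫ x, g i x ∂μ) :
    Integrable (fun x => ∑' i, c i * g i x) μ :=
  integrable_tsum_of_summable_integral_norm (fun i => (hint i).const_mul (c i))
    (summable_integral_norm_const_mul_of_nonneg hg hsum)

lemma integral_tsum_const_mul_of_nonneg (hg : ∀ i, 0 ≤ᵐ[μ] g i) (hint : ∀ i, Integrable (g i) μ)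
    (hsum : Summable fun i => c i * ∫ x, g i x ∂μ) :
    ∫ x, ∑' i, c i * g i x ∂μ = ∑' i, c i * ∫ x, g i x ∂μ := by
  rw [← integral_tsum_of_summable_integral_norm (fun i => (hint i).const_mul (c i))
    (summable_integral_norm_const_mul_of_nonneg hg hsum)]
  simp_rw [integral_const_mul]

end TermwiseIntegration

section GaussianMoments

lemma rpow_mul_exp_neg_sq_div_two_nonneg_ae (s : ℝ) :
    0 ≤ᵐ[volume.restrict (Set.Ioi 0)] fun r : ℝ => r ^ s * exp (-r ^ 2 / 2) := by
  filter_upwards [ae_restrict_mem measurableSet_Ioi] with r (hr : 0 < r)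
  simp only [Pi.zero_apply]
  positivity

lemma integrableOn_rpow_mul_exp_neg_sq_div_two {s : ℝ} (hs : -1 < s) :
    IntegrableOn (fun r : ℝ => r ^ s * exp (-r ^ 2 / 2)) (Set.Ioi 0) := by
  convert! integrableOn_rpow_mul_exp_neg_mul_sq (b := 1 / 2) (by norm_num) hs using 4
  ring

lemma integral_rpow_mul_exp_neg_sq_div_two {s : ℝ} (hs : -1 < s) :
    ∫ r in Set.Ioi (0 : ℝ), r ^ s * exp (-r ^ 2 / 2) = 2 ^ ((s - 1) / 2) * Gamma ((s + 1) / 2) := by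
  have hexp (r : ℝ) : -r ^ 2 / 2 = -(1 / 2) * r ^ (2 : ℝ) := by rw [rpow_two]; ring
  have hconst : ((1 : ℝ) / 2) ^ (-(s + 1) / 2) * (1 / 2) = 2 ^ ((s - 1) / 2) := by
    rw [one_div, inv_rpow two_pos.le, ← rpow_neg two_pos.le, ← rpow_neg_one, ← rpow_add two_pos]
    ring_nf
  simp_rw [hexp]
  rw [integral_rpow_mul_exp_neg_mul_rpow two_pos hs (by norm_num), hconst]

end GaussianMoments

section Series

/-- The `q`-th term of the series `hyp1F1 a c x`. -/
noncomputable def hyp1F1Term (a c x : ℝ) (q : ℕ) : ℝ :=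
  (Gamma (a + q) / Gamma a) / (Gamma (c + q) / Gamma c) * x ^ q / q.factorial

lemma hyp1F1_eq_tsum (a c x : ℝ) : hyp1F1 a c x = ∑' q, hyp1F1Term a c x q := rfl

lemma ofReal_hyp1F1Term {a : ℝ} (ha : ∀ k : ℕ, a ≠ -k) (c x : ℝ) (q : ℕ) :
    (hyp1F1Term a c x q : ℂ) =
      Complex.Gamma c * (Complex.regularizedHGFunCoeff {(a : ℂ)} {(c : ℂ)} q * (x : ℂ) ^ q) := by
  have hpoch := Complex.Gamma_add_nat_div_Gamma_eq (n := q) (a : ℂ) (by exact_mod_cast ha)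
  simp only [hyp1F1Term, Complex.regularizedHGFunCoeff, Multiset.map_singleton,
    Multiset.prod_singleton, ← hpoch]
  push_cast [← Complex.Gamma_ofReal]
  simp only [div_eq_mul_inv, mul_inv, inv_inv]
  ring

lemma summable_hyp1F1Term {a : ℝ} (ha : ∀ k : ℕ, a ≠ -k) (c x : ℝ) :
    Summable (hyp1F1Term a c x) := by
  have hradius : (Complex.regularizedHGFunSeries {(a : ℂ)} {(c : ℂ)}).radius = ⊤ :=
    Complex.radius_regularizedHGFunSeries_eq_top (by simp)
  have hseries : Summable fun q =>
      Complex.regularizedHGFunCoeff {(a : ℂ)} {(c : ℂ)} q * (x : ℂ) ^ q := by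
    simpa [Complex.regularizedHGFunSeries, mul_comm] using
      (Complex.regularizedHGFunSeries {(a : ℂ)} {(c : ℂ)}).summable (x := (x : ℂ))
        (by simp only [hradius, Metric.eball_top, Set.mem_univ])
  rw [← Complex.summable_ofReal]
  simpa only [ofReal_hyp1F1Term ha] using hseries.mul_left (Complex.Gamma c)

/-- The coefficient of `r ^ (2q + b)` in the expansion of `modBesselI b (ρ * r)`. -/
noncomputable def modBesselICoeff (b ρ : ℝ) (q : ℕ) : ℝ :=
  (ρ / 2) ^ (2 * (q : ℝ) + b) / (q.factorial * Gamma (b + q + 1))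

lemma modBesselI_mul_eq_tsum (b : ℝ) {ρ r : ℝ} (hρ : 0 ≤ ρ) (hr : 0 ≤ r) :
    modBesselI b (ρ * r) = ∑' q : ℕ, modBesselICoeff b ρ q * r ^ (2 * (q : ℝ) + b) := by
  refine tsum_congr fun q => ?_
  rw [modBesselICoeff, mul_div_right_comm, mul_rpow (by positivity) hr]
  ring

lemma exp_neg_sq_div_two_mul_modBesselI_mul_rpow (b ν : ℝ) {ρ r : ℝ} (hρ : 0 ≤ ρ) (hr : 0 < r) :
    exp (-r ^ 2 / 2) * modBesselI b (ρ * r) * r ^ (ν + 1) =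
      ∑' q : ℕ, modBesselICoeff b ρ q * (r ^ (2 * (q : ℝ) + b + (ν + 1)) * exp (-r ^ 2 / 2)) := by
  rw [modBesselI_mul_eq_tsum b hρ hr.le, ← tsum_mul_left, ← tsum_mul_right]
  refine tsum_congr fun q => ?_
  rw [rpow_add hr (2 * (q : ℝ) + b)]
  ring

lemma div_two_rpow_mul_two_rpow (b ν : ℝ) {ρ : ℝ} (hρ : 0 < ρ) (q : ℕ) :
    (ρ / 2) ^ (2 * (q : ℝ) + b) * 2 ^ ((2 * (q : ℝ) + b + (ν + 1) - 1) / 2) =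
      2 ^ ((ν - b) / 2) * ρ ^ b * (ρ ^ 2 / 2) ^ q := by
  have hsplit : (2 * (q : ℝ) + b + (ν + 1) - 1) / 2 = (q + b) + (ν - b) / 2 := by ring
  have hsquare : (ρ / 2) ^ (2 * (q : ℝ)) * 2 ^ q = (ρ ^ 2 / 2) ^ q := by
    rw [rpow_mul (by positivity), rpow_two, rpow_natCast, ← mul_pow]
    ring
  rw [hsplit, rpow_add two_pos, rpow_add two_pos, rpow_add (by positivity), rpow_natCast,
    ← hsquare, div_rpow hρ.le two_pos.le b]
  field_simp

lemma modBesselICoeff_mul_integral_rpow_mul_exp {a b ν ρ : ℝ} (haν : a = (b + ν) / 2)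
    (hρ : 0 < ρ) (ha : Gamma (a + 1) ≠ 0) (hb : Gamma (b + 1) ≠ 0) {q : ℕ}
    (hq : -1 < 2 * (q : ℝ) + b + (ν + 1)) :
    modBesselICoeff b ρ q *
        ∫ r in Set.Ioi (0 : ℝ), r ^ (2 * (q : ℝ) + b + (ν + 1)) * exp (-r ^ 2 / 2) =
      2 ^ ((ν - b) / 2) * ρ ^ b * (Gamma (a + 1) / Gamma (b + 1)) *
        hyp1F1Term (a + 1) (b + 1) (ρ ^ 2 / 2) q := by
  have harg : (2 * (q : ℝ) + b + (ν + 1) + 1) / 2 = a + 1 + q := by rw [haν]; ring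
  calc
    _ = (ρ / 2) ^ (2 * (q : ℝ) + b) * 2 ^ ((2 * (q : ℝ) + b + (ν + 1) - 1) / 2) *
        (Gamma (a + 1 + q) / (q.factorial * Gamma (b + 1 + q))) := by
      rw [integral_rpow_mul_exp_neg_sq_div_two hq, modBesselICoeff, harg, add_right_comm b]
      ring
    _ = _ := by
      rw [div_two_rpow_mul_two_rpow b ν hρ, hyp1F1Term]
      field_simp

end Series

theorem stmt_11_general (b ν : ℝ) (hb : ∀ n : ℕ, b + 1 ≠ -n) (hbv : -2 < b + ν) (a : ℝ)
    (ha : a = (b + ν) / 2) (ρ : ℝ) (hρ : 0 < ρ) :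
    IntegrableOn (fun r : ℝ => exp (-r ^ 2 / 2) * modBesselI b (ρ * r) * r ^ (ν + 1)) (Set.Ioi 0)
    ∧ ∫ r in Set.Ioi (0 : ℝ), exp (-r ^ 2 / 2) * modBesselI b (ρ * r) * r ^ (ν + 1)
      = 2 ^ ((ν - b) / 2) * ρ ^ b * (Gamma (a + 1) / Gamma (b + 1))
          * hyp1F1 (a + 1) (b + 1) (ρ ^ 2 / 2) := by
  have ha_pos : 0 < a + 1 := by linarith
  have hexponent (q : ℕ) : -1 < 2 * (q : ℝ) + b + (ν + 1) := by linarith [q.cast_nonneg (α := ℝ)]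
  have hterm (q : ℕ) := modBesselICoeff_mul_integral_rpow_mul_exp ha hρ
    (Gamma_pos_of_pos ha_pos).ne' (Gamma_ne_zero hb) (hexponent q)
  have hsum := (summable_hyp1F1Term (fun k => by linarith [k.cast_nonneg (α := ℝ)]) (b + 1)
    (ρ ^ 2 / 2)).mul_left _ |>.congr fun q => (hterm q).symm
  have hexpand : Set.EqOn
      (fun r : ℝ => exp (-r ^ 2 / 2) * modBesselI b (ρ * r) * r ^ (ν + 1)) _ (Set.Ioi 0) :=
    fun r hr => exp_neg_sq_div_two_mul_modBesselI_mul_rpow b ν hρ.le hr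
  have hnonneg (q : ℕ) := rpow_mul_exp_neg_sq_div_two_nonneg_ae (2 * (q : ℝ) + b + (ν + 1))
  have hint (q : ℕ) := integrableOn_rpow_mul_exp_neg_sq_div_two (hexponent q)
  constructor
  · rw [integrableOn_congr_fun hexpand measurableSet_Ioi]
    exact integrable_tsum_const_mul_of_nonneg hnonneg hint hsum
  · rw [setIntegral_congr_fun measurableSet_Ioi hexpand,
      integral_tsum_const_mul_of_nonneg hnonneg hint hsum, hyp1F1_eq_tsum, ← tsum_mul_left]
    exact tsum_congr hterm

/-- For `b > −1`, `b + ν > −2`, `a = (b+ν)/2` and `ρ > 0`, the integral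
`∫_0^∞ e^{−r²/2} I_b(ρr) r^{ν+1} dr` converges and equals
`2^{(ν−b)/2} ρ^b [Γ(a+1)/Γ(b+1)] ₁F₁(a+1; b+1; ρ²/2)`. -/
theorem stmt_11 (b ν : ℝ) (hb : -1 < b) (hbv : -2 < b + ν) (a : ℝ) (ha : a = (b + ν) / 2)
    (ρ : ℝ) (hρ : 0 < ρ) :
    IntegrableOn (fun r : ℝ => Real.exp (-r ^ 2 / 2) * modBesselI b (ρ * r) * r ^ (ν + 1))
        (Set.Ioi 0)
    ∧ ∫ r in Set.Ioi (0 : ℝ), Real.exp (-r ^ 2 / 2) * modBesselI b (ρ * r) * r ^ (ν + 1)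
      = 2 ^ ((ν - b) / 2) * ρ ^ b * (Real.Gamma (a + 1) / Real.Gamma (b + 1))
          * hyp1F1 (a + 1) (b + 1) (ρ ^ 2 / 2) :=
  stmt_11_general b ν (fun n => by linarith [n.cast_nonneg (α := ℝ)]) hbv a ha ρ hρ
end

section
/- Let p ≥ 1 be an integer, k₀, k₁ ≥ 0, γ = p(k₀+k₁), b_j = 2jp + γ, and z ∈ (0,1). Then for all ρ, r ≥ 0 and φ, θ ∈ [0, π/(2p)], both of the following series converge absolutely and are equal: ∑_{j=0}^{∞} ∑_{q=0}^{∞} [q!/Γ(b_j+q+1)] L_q^{(b_j)}(ρ²/2) L_q^{(b_j)}(r²/2) P_j^{(k₀−1/2,k₁−1/2)}(cos 2pφ) P_j^{(k₀−1/2,k₁−1/2)}(cos 2pθ) (ρr/2)^{2jp} z^{2(q+jp)} = (1−z²)^{−γ−1} exp(−z²(ρ²+r²)/(2(1−z²))) · ∑_{j=0}^{∞} [1/Γ(b_j+1)] (zρr/(2(1−z²)))^{2jp} ₀F₁(b_j+1; z²ρ²r²/(4(1−z²)²)) P_j^{(k₀−1/2,k₁−1/2)}(cos 2pφ) P_j^{(k₀−1/2,k₁−1/2)}(cos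 2pθ). (This is the Mehler-type generating identity for the W-invariant generalized Hermite polynomials of the even dihedral system I₂(2p), the right-hand side being the Gaussian-type kernel built from the generalized Bessel function.) -/
open Real Finset

/-- The Laguerre polynomial
`L_q^{(α)}(x) = ∑_{m=0}^{q} [Γ(q+α+1)/(Γ(m+α+1)(q−m)!)] (−x)^m/m!`. -/
noncomputable def laguerrePoly (α : ℝ) (q : ℕ) (x : ℝ) : ℝ :=
  ∑ m ∈ Finset.range (q + 1),
    (Real.Gamma ((q : ℝ) + α + 1) / (Real.Gamma ((m : ℝ) + α + 1) * (Nat.factorial (q - m)))) *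
      (-x) ^ m / (Nat.factorial m)

/-- The hypergeometric function `₀F₁(c; x) = ∑_{q=0}^∞ [Γ(c)/Γ(c+q)] x^q/q!`. -/
noncomputable def hyp0F1 (c x : ℝ) : ℝ :=
  ∑' q : ℕ, (Real.Gamma c / Real.Gamma (c + q)) * x ^ q / (Nat.factorial q)

/-!
For each `j`, the sum over `q` is a Hardy–Hille series with parameter `b_j`, so the identity follows
termwise in `j`, and only the Hardy–Hille formula and absolute convergence are at stake.

The Hardy–Hille formula comes from the generating function
`∑ L_q^{(α)}(x) t^q = (1 - t)^{-α-1} exp(-x t / (1 - t))`. Replacing `t` by `t (1 + s)` in it gives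
the same function at the arguments `x / (1 - t)` and `s t / (1 - t)`, up to a factor free of `s`;
comparing the coefficients of `s^n` evaluates `∑_q (q choose n) L_q^{(α)}(x) t^q`. Summing this over
the monomials `y^n` of `L_q^{(α)}(y)` leaves a Cauchy product of an exponential and a `₀F₁`.

Every term is bounded in absolute value by its value at the arguments `-|x|`, `-|y|`, `|t|`, where
all terms are nonnegative; the formula itself thus provides the dominating series. Since
`|P_j^{(α,β)}| ≤ C 4^j` on `[-1, 1]`, the factor `1 / Γ(b_j + 1)` makes the sum over `j` converge.
-/

section DoubleSeries

variable {ι κ E : Type*} [NormedAddCommGroup E] {f : ι → κ → E}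
  {F : ι → κ → ℝ} {G : ι → ℝ}

lemma summable_norm_prod_of_norm_le (hfF : ∀ i k, ‖f i k‖ ≤ F i k)
    (hF : ∀ i, HasSum (F i) (G i)) (hG : Summable G) :
    Summable fun x : ι × κ => ‖f x.1 x.2‖ := by
  have hF_nonneg : ∀ i k, 0 ≤ F i k := fun i k => (norm_nonneg _).trans (hfF i k)
  have hF_prod : Summable fun x : ι × κ => F x.1 x.2 :=
    (summable_prod_of_nonneg fun x => hF_nonneg x.1 x.2).2
      ⟨fun i => (hF i).summable, by simpa only [(hF _).tsum_eq] using hG⟩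
  exact hF_prod.of_nonneg_of_le (fun _ => norm_nonneg _) fun x => hfF x.1 x.2

lemma hasSum_comm_of_norm_le [CompleteSpace E] {g : ι → E} {h : κ → E} {s : E}
    (hfF : ∀ i k, ‖f i k‖ ≤ F i k) (hF : ∀ i, HasSum (F i) (G i)) (hG : Summable G)
    (hf : ∀ i, HasSum (f i) (g i)) (hg : HasSum g s)
    (hh : ∀ k, HasSum (fun i => f i k) (h k)) : HasSum h s := by
  have hprod := (summable_norm_prod_of_norm_le hfF hF hG).of_norm.hasSum
  rw [(hprod.prod_fiberwise hf).unique hg] at hprod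
  exact ((Equiv.prodComm κ ι).hasSum_iff.2 hprod).prod_fiberwise hh

end DoubleSeries

section PowerSeries

open Filter Topology

lemma eq_of_eventually_hasSum_mul_pow {𝕜 : Type*} [NontriviallyNormedField 𝕜] {a b : ℕ → 𝕜}
    {f : 𝕜 → 𝕜} (ha : ∀ᶠ s in 𝓝 0, HasSum (fun n => a n * s ^ n) (f s))
    (hb : ∀ᶠ s in 𝓝 0, HasSum (fun n => b n * s ^ n) (f s)) : a = b := by
  have hasFPowerSeries : ∀ c : ℕ → 𝕜, (∀ᶠ s in 𝓝 0, HasSum (fun n => c n * s ^ n) (f s)) →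
      HasFPowerSeriesAt f (.ofScalars 𝕜 c) 0 := fun c hc =>
    hasFPowerSeriesAt_iff.2 (by simpa [mul_comm] using hc)
  have hab := (hasFPowerSeries a ha).eq_formalMultilinearSeries (hasFPowerSeries b hb)
  funext n
  simpa using congrArg (fun p => p.coeff n) hab

lemma hasSum_choose_mul_pow {R : Type*} [CommSemiring R] [TopologicalSpace R] (q : ℕ) (s : R) :
    HasSum (fun n => (q.choose n : R) * s ^ n) ((1 + s) ^ q) := by
  rw [add_comm, add_pow]
  simp only [one_pow, mul_one, mul_comm]
  refine hasSum_sum_of_ne_finset_zero fun n hn => ?_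
  simp [Nat.choose_eq_zero_of_lt (by simpa using hn : q < n)]

variable {a b : ℕ → ℝ} {f : ℝ → ℝ} {r s t : ℝ}

lemma eventually_abs_mul_one_add_abs_lt (ht : |t| < r) :
    ∀ᶠ s in 𝓝 (0 : ℝ), |t| * (1 + |s|) < r :=
  (by fun_prop : Continuous fun s : ℝ => |t| * (1 + |s|)).tendsto 0 |>.eventually_lt_const
    (by simpa using ht)

lemma eventually_abs_mul_lt_one (τ : ℝ) : ∀ᶠ s in 𝓝 (0 : ℝ), |s * τ| < 1 :=
  (by fun_prop : Continuous fun s : ℝ => |s * τ|).tendsto 0 |>.eventually_lt_const (by simp)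

lemma norm_choose_mul_mul_pow (q n : ℕ) (x s : ℝ) :
    ‖(q.choose n : ℝ) * x * s ^ n‖ = |x| * (q.choose n * |s| ^ n) := by
  simp only [norm_mul, norm_pow, norm_eq_abs, Nat.abs_cast]
  ring

lemma summable_abs_mul_one_add_abs_pow (hf : ∀ s, |s| < r → HasSum (fun q => a q * s ^ q) (f s))
    (hs : |t| * (1 + |s|) < r) : Summable fun q => |a q * t ^ q| * (1 + |s|) ^ q := by
  have hnonneg : 0 ≤ |t| * (1 + |s|) := by positivity
  refine (hf _ (by rwa [abs_of_nonneg hnonneg])).summable.abs.congr fun q => ?_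
  rw [abs_mul, abs_mul, abs_pow, abs_pow, abs_of_nonneg hnonneg, mul_pow, mul_assoc]

lemma summable_choose_mul (hf : ∀ s, |s| < r → HasSum (fun q => a q * s ^ q) (f s))
    (ht : |t| < r) (n : ℕ) : Summable fun q : ℕ => q.choose n * (a q * t ^ q) := by
  obtain ⟨s, hs, hs0⟩ := (((eventually_abs_mul_one_add_abs_lt ht).filter_mono
    nhdsWithin_le_nhds).and (self_mem_nhdsWithin : {0}ᶜ ∈ 𝓝[≠] (0 : ℝ))).exists
  have hdouble := summable_norm_prod_of_norm_le
    (fun q n => (norm_choose_mul_mul_pow q n (a q * t ^ q) s).le)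
    (fun q => (hasSum_choose_mul_pow q |s|).mul_left _) (summable_abs_mul_one_add_abs_pow hf hs)
  exact (summable_mul_right_iff (pow_ne_zero n hs0)).1 (hdouble.of_norm.prod_symm.prod_factor n)

lemma hasSum_tsum_choose_mul_mul_pow (hf : ∀ s, |s| < r → HasSum (fun q => a q * s ^ q) (f s))
    (hs : |t| * (1 + |s|) < r) :
    HasSum (fun n => (∑' q : ℕ, q.choose n * (a q * t ^ q)) * s ^ n) (f (t * (1 + s))) := by
  have ht : |t| < r := hs.trans_le' (le_mul_of_one_le_right (abs_nonneg t) (by simp))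
  have hts : |t * (1 + s)| < r := by
    rw [abs_mul]
    exact hs.trans_le' (by gcongr; simpa using abs_add_le 1 s)
  refine hasSum_comm_of_norm_le (fun q n => (norm_choose_mul_mul_pow q n (a q * t ^ q) s).le)
    (fun q => (hasSum_choose_mul_pow q |s|).mul_left _) (summable_abs_mul_one_add_abs_pow hf hs)
    (fun q => ?_) (hf _ hts) fun n => (summable_choose_mul hf ht n).hasSum.mul_right _
  convert! (hasSum_choose_mul_pow q s).mul_left (a q * t ^ q) using 1
  · funext n; ring
  · rw [mul_pow]; ring

/- The coefficients `∑ (q choose n) a_q t^q` are those of `s ↦ f (t (1 + s))`, so any other way of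
expanding this function in powers of `s` evaluates them. -/
lemma hasSum_choose_mul_of_hasSum_comp
    (hf : ∀ s, |s| < r → HasSum (fun q => a q * s ^ q) (f s)) (ht : |t| < r)
    (hb : ∀ᶠ s in 𝓝 0, HasSum (fun n => b n * s ^ n) (f (t * (1 + s)))) (n : ℕ) :
    HasSum (fun q : ℕ => q.choose n * (a q * t ^ q)) (b n) := by
  have hexpand := (eventually_abs_mul_one_add_abs_lt ht).mono fun s hs =>
    hasSum_tsum_choose_mul_mul_pow hf hs
  rw [← eq_of_eventually_hasSum_mul_pow hexpand hb]
  exact (summable_choose_mul hf ht n).hasSum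

end PowerSeries

section BinomialSeries

variable {c t : ℝ}

lemma Gamma_natCast_add_pos (hc : 0 < c) (n : ℕ) : 0 < Gamma (n + c) :=
  Gamma_pos_of_pos (by positivity)

lemma ascPochhammer_eval_eq_Gamma_div_Gamma (hc : 0 < c) (n : ℕ) :
    (ascPochhammer ℝ n).eval c = Gamma (n + c) / Gamma c := by
  induction n with
  | zero => simp [(Gamma_pos_of_pos hc).ne']
  | succ n ih =>
    have hshift : ((n + 1 : ℕ) : ℝ) + c = (n + c) + 1 := by push_cast; ring
    rw [ascPochhammer_succ_eval, ih, hshift, Gamma_add_one (by positivity)]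
    ring

lemma hasSum_Gamma_div_factorial_mul_pow (hc : 0 < c) (ht : |t| < 1) :
    HasSum (fun q : ℕ => Gamma (q + c) / (q.factorial : ℝ) * t ^ q)
      (Gamma c * (1 - t) ^ (-c)) := by
  have hbinom := (one_div_one_sub_rpow_hasFPowerSeriesOnBall_zero c).hasSum (y := t)
    (by simpa [enorm_eq_nnnorm, ← NNReal.coe_lt_coe] using ht)
  have hchoose : ∀ q : ℕ, Ring.choose (c + q - 1) q = Gamma (q + c) / Gamma c / q.factorial := by
    intro q
    have hasc := Ring.factorial_nsmul_multichoose_eq_ascPochhammer c q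
    rw [Polynomial.ascPochhammer_smeval_eq_eval, ascPochhammer_eval_eq_Gamma_div_Gamma hc,
      nsmul_eq_mul] at hasc
    rw [← hasc, mul_div_cancel_left₀ _ (by positivity), Ring.choose]
    congr 1
    ring
  convert! hbinom.mul_left (Gamma c) using 1
  · funext q
    simp only [FormalMultilinearSeries.ofScalars_apply_eq, hchoose, smul_eq_mul]
    field_simp [(Gamma_pos_of_pos hc).ne']
  · rw [zero_add, one_div, rpow_neg (by linarith [(abs_lt.1 ht).2])]

lemma hasSum_choose_mul_Gamma_div_factorial_mul_pow (hc : 0 < c) (ht : |t| < 1) (n : ℕ) :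
    HasSum (fun q : ℕ => q.choose n * (Gamma (q + c) / (q.factorial : ℝ) * t ^ q))
      ((1 - t) ^ (-c) * (Gamma (n + c) / (n.factorial : ℝ) * (t / (1 - t)) ^ n)) := by
  refine hasSum_choose_mul_of_hasSum_comp
    (b := fun n => (1 - t) ^ (-c) * (Gamma (n + c) / (n.factorial : ℝ) * (t / (1 - t)) ^ n))
    (fun s hs => hasSum_Gamma_div_factorial_mul_pow hc hs) ht ?_ n
  filter_upwards [eventually_abs_mul_lt_one (t / (1 - t))] with s hs
  have ht' : 0 < 1 - t := by linarith [(abs_lt.1 ht).2]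
  have hfactor : 1 - t * (1 + s) = (1 - t) * (1 - s * (t / (1 - t))) := by field_simp; ring
  convert! (hasSum_Gamma_div_factorial_mul_pow hc hs).mul_left ((1 - t) ^ (-c)) using 1
  · funext n; rw [mul_pow]; ring
  · rw [hfactor, mul_rpow ht'.le (by linarith [(abs_lt.1 hs).2])]; ring

lemma Gamma_div_Gamma_mul_factorial_le (hc : 0 < c) (n : ℕ) :
    Gamma (n + c) / (Gamma c * n.factorial) ≤ 2 ^ (n + c) := by
  have := Gamma_pos_of_pos hc
  have hterm := le_hasSum (hasSum_Gamma_div_factorial_mul_pow hc (t := 1 / 2)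
    (by norm_num [abs_lt])) n fun m _ => by
      have := Gamma_natCast_add_pos hc m
      positivity
  rw [div_le_iff₀ (by positivity), rpow_add two_pos, rpow_natCast]
  have hhalf : (1 - 1 / 2 : ℝ) ^ (-c) = 2 ^ c := by
    rw [show (1 - 1 / 2 : ℝ) = 2⁻¹ by norm_num, inv_rpow two_pos.le, rpow_neg two_pos.le, inv_inv]
  rw [hhalf, one_div, inv_pow, ← div_eq_mul_inv, div_div, div_le_iff₀ (by positivity)] at hterm
  linarith

lemma summable_pow_div_Gamma (c x : ℝ) :
    Summable fun n : ℕ => x ^ n / Gamma (n + c) := by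
  have hradius := Complex.radius_regularizedHGFunSeries_eq_top (a := {1}) (b := {(c : ℂ)})
    (by simp)
  have hsummable := (Complex.regularizedHGFunSeries {1} {(c : ℂ)}).summable_norm_mul_pow
    (r := ‖x‖₊) (by simp [hradius])
  refine .of_norm (hsummable.congr fun n => ?_)
  have hcoeff : Complex.regularizedHGFunCoeff {1} {(c : ℂ)} n = ((Gamma (n + c))⁻¹ : ℝ) := by
    have hGamma : Complex.Gamma (c + n) = (Gamma (n + c) : ℝ) := by
      rw [← Complex.Gamma_ofReal]; push_cast; ring_nf
    have hfactorial : (n.factorial : ℂ) ≠ 0 := by exact_mod_cast n.factorial_ne_zero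
    simp only [Complex.regularizedHGFunCoeff, Multiset.map_singleton, Multiset.prod_singleton,
      ascPochhammer_eval_one, hGamma]
    push_cast
    field_simp
  rw [FormalMultilinearSeries.norm_apply_eq_norm_coef, Complex.regularizedHGFunSeries_coeff, hcoeff]
  simp [div_eq_inv_mul]

end BinomialSeries

lemma hasSum_pow_div_factorial (x : ℝ) : HasSum (fun n : ℕ => x ^ n / n.factorial) (exp x) := by
  rw [exp_eq_exp_ℝ]
  exact NormedSpace.expSeries_div_hasSum_exp x

section Laguerre

variable {α t : ℝ}

lemma Gamma_natCast_add_add_one_pos (hα : -1 < α) (n : ℕ) : 0 < Gamma (n + α + 1) := by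
  rw [add_assoc]
  exact Gamma_natCast_add_pos (by linarith) n

lemma hasSum_laguerrePoly (α : ℝ) (q : ℕ) (x : ℝ) :
    HasSum (fun m : ℕ => Gamma (q + α + 1) / (Gamma (m + α + 1) * q.factorial) * q.choose m *
      (-x) ^ m) (laguerrePoly α q x) := by
  have hterm : laguerrePoly α q x = ∑ m ∈ range (q + 1),
      Gamma (q + α + 1) / (Gamma (m + α + 1) * q.factorial) * q.choose m * (-x) ^ m := by
    refine sum_congr rfl fun m hm => ?_
    rw [Nat.cast_choose ℝ (mem_range_succ_iff.1 hm)]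
    field_simp
  rw [hterm]
  refine hasSum_sum_of_ne_finset_zero fun m hm => ?_
  simp [Nat.choose_eq_zero_of_lt (by simpa using hm : q < m)]

lemma abs_laguerrePoly_le (hα : -1 < α) (q : ℕ) (x : ℝ) :
    |laguerrePoly α q x| ≤ laguerrePoly α q (-|x|) := by
  refine (abs_sum_le_sum_abs _ _).trans_eq (sum_congr rfl fun m _ => ?_)
  simp only [abs_mul, abs_div, abs_pow, abs_neg, neg_neg, Nat.abs_cast,
    abs_of_pos (Gamma_natCast_add_add_one_pos hα _)]

lemma hasSum_laguerrePoly_mul_pow (hα : -1 < α) (ht : |t| < 1) (x : ℝ) :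
    HasSum (fun q => laguerrePoly α q x * t ^ q)
      ((1 - t) ^ (-(α + 1)) * exp (-(x * (t / (1 - t))))) := by
  have hsum_q : ∀ {t : ℝ}, |t| < 1 → ∀ (x : ℝ) (m : ℕ),
      HasSum (fun q : ℕ => (-x) ^ m / Gamma (m + α + 1) *
          (q.choose m * (Gamma (q + (α + 1)) / q.factorial * t ^ q)))
        ((1 - t) ^ (-(α + 1)) * ((-(x * (t / (1 - t)))) ^ m / m.factorial)) := by
    intro t ht x m
    convert! (hasSum_choose_mul_Gamma_div_factorial_mul_pow
      (by linarith : 0 < α + 1) ht m).mul_left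
      ((-x) ^ m / Gamma (m + α + 1)) using 1
    have := (Gamma_natCast_add_add_one_pos hα m).ne'
    rw [← add_assoc, ← neg_mul, mul_pow]
    field_simp
  refine hasSum_comm_of_norm_le (fun m q => ?_)
    (hsum_q (by rwa [abs_abs] : |(|t|)| < 1) (-|x|)) ?_ (hsum_q ht x)
    ((hasSum_pow_div_factorial _).mul_left _) fun q => ?_
  · simp only [norm_mul, norm_div, norm_pow, norm_neg, norm_eq_abs, Nat.abs_cast, neg_neg,
      ← add_assoc, abs_of_pos (Gamma_natCast_add_add_one_pos hα _), le_refl]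
  · exact (hasSum_pow_div_factorial _).summable.mul_left _
  · convert! (hasSum_laguerrePoly α q x).mul_right (t ^ q) using 2 with m
    rw [← add_assoc]
    ring

lemma hasSum_choose_mul_laguerrePoly_mul_pow (hα : -1 < α) (ht : |t| < 1) (x : ℝ) (n : ℕ) :
    HasSum (fun q : ℕ => q.choose n * (laguerrePoly α q x * t ^ q))
      ((1 - t) ^ (-(α + 1)) * exp (-(x * (t / (1 - t)))) *
        (laguerrePoly α n (x / (1 - t)) * (t / (1 - t)) ^ n)) := by
  refine hasSum_choose_mul_of_hasSum_comp
    (b := fun n => (1 - t) ^ (-(α + 1)) * exp (-(x * (t / (1 - t)))) *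
      (laguerrePoly α n (x / (1 - t)) * (t / (1 - t)) ^ n))
    (fun s hs => hasSum_laguerrePoly_mul_pow hα hs x) ht ?_ n
  filter_upwards [eventually_abs_mul_lt_one (t / (1 - t))] with s hs
  have ht' : 0 < 1 - t := by linarith [(abs_lt.1 ht).2]
  have hs' : 0 < 1 - s * (t / (1 - t)) := by linarith [(abs_lt.1 hs).2]
  have hfactor : 1 - t * (1 + s) = (1 - t) * (1 - s * (t / (1 - t))) := by field_simp; ring
  have hexponent : -(x * (t * (1 + s) / (1 - t * (1 + s)))) = -(x * (t / (1 - t))) +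
      -(x / (1 - t) * (s * (t / (1 - t)) / (1 - s * (t / (1 - t))))) := by
    rw [hfactor]
    generalize hu : 1 - s * (t / (1 - t)) = u at hs'
    have hs_eq : s * t = (1 - u) * (1 - t) := by
      rw [← hu]; field_simp; ring
    field_simp
    linear_combination x * t * hs_eq
  convert! (hasSum_laguerrePoly_mul_pow hα hs (x / (1 - t))).mul_left
    ((1 - t) ^ (-(α + 1)) * exp (-(x * (t / (1 - t))))) using 1
  · funext n; rw [mul_pow]; ring
  · rw [hexponent, hfactor, mul_rpow ht'.le hs'.le, exp_add]; ring

end Laguerre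

section Hypergeometric

variable {c c' x : ℝ}

lemma summable_norm_pow_div_Gamma_mul_factorial (c x : ℝ) :
    Summable fun q : ℕ => ‖x ^ q / (Gamma (q + c) * q.factorial)‖ := by
  refine (summable_pow_div_Gamma c x).norm.of_nonneg_of_le (fun _ => norm_nonneg _) fun q => ?_
  rw [← div_div, norm_div]
  refine div_le_self (norm_nonneg _) ?_
  rw [norm_natCast]
  exact_mod_cast q.factorial_pos

lemma hasSum_hyp0F1 (c x : ℝ) :
    HasSum (fun q : ℕ => Gamma c * (x ^ q / (Gamma (q + c) * q.factorial))) (hyp0F1 c x) := by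
  convert! ((summable_norm_pow_div_Gamma_mul_factorial c x).of_norm.mul_left (Gamma c)).hasSum
    using 1
  refine tsum_congr fun q => ?_
  rw [add_comm c, ← mul_div_assoc, ← div_div, ← mul_div_right_comm]

lemma hyp0F1_nonneg (hc : 0 < c) (hx : 0 ≤ x) : 0 ≤ hyp0F1 c x :=
  (hasSum_hyp0F1 c x).nonneg fun q => by
    have := Gamma_pos_of_pos hc
    have := Gamma_natCast_add_pos hc q
    positivity

lemma Gamma_mul_Gamma_natCast_add_le (hc : 0 < c) (hcc' : c ≤ c') (q : ℕ) :
    Gamma c' * Gamma (q + c) ≤ Gamma c * Gamma (q + c') := by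
  have hc' := hc.trans_le hcc'
  induction q with
  | zero => simp [mul_comm]
  | succ q ih =>
    have hshift : ∀ {c : ℝ}, 0 < c → Gamma ((q + 1 : ℕ) + c) = (q + c) * Gamma (q + c) := by
      intro c hc
      rw [← Gamma_add_one (by positivity)]
      push_cast
      ring_nf
    have := Gamma_pos_of_pos hc
    have := Gamma_natCast_add_pos hc' q
    calc Gamma c' * Gamma ((q + 1 : ℕ) + c) = (q + c) * (Gamma c' * Gamma (q + c)) := by
          rw [hshift hc]; ring
      _ ≤ (q + c') * (Gamma c * Gamma (q + c')) := by gcongr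
      _ = Gamma c * Gamma ((q + 1 : ℕ) + c') := by rw [hshift hc']; ring

lemma hyp0F1_le_of_le (hc : 0 < c) (hcc' : c ≤ c') (hx : 0 ≤ x) : hyp0F1 c' x ≤ hyp0F1 c x := by
  refine hasSum_le (fun q => ?_) (hasSum_hyp0F1 c' x) (hasSum_hyp0F1 c x)
  have := Gamma_natCast_add_pos hc q
  have := Gamma_natCast_add_pos (hc.trans_le hcc') q
  rw [← mul_div_assoc, ← mul_div_assoc, div_le_div_iff₀ (by positivity) (by positivity)]
  calc Gamma c' * x ^ q * (Gamma (q + c) * q.factorial)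
      = Gamma c' * Gamma (q + c) * (x ^ q * q.factorial) := by ring
    _ ≤ Gamma c * Gamma (q + c') * (x ^ q * q.factorial) := by
      have := Gamma_mul_Gamma_natCast_add_le hc hcc' q
      gcongr
    _ = Gamma c * x ^ q * (Gamma (q + c') * q.factorial) := by ring

lemma hasSum_laguerrePoly_mul_pow_div_Gamma {α : ℝ} (hα : -1 < α) (x s : ℝ) :
    HasSum (fun n : ℕ => laguerrePoly α n x * (s ^ n / Gamma (n + α + 1)))
      (exp s * hyp0F1 (α + 1) (-(x * s)) / Gamma (α + 1)) := by
  have hGamma : Gamma (α + 1) ≠ 0 := (Gamma_pos_of_pos (by linarith)).ne'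
  have hcauchy := hasSum_sum_range_mul_of_summable_norm
    (summable_norm_pow_div_Gamma_mul_factorial (α + 1) (-(x * s)))
    (hasSum_pow_div_factorial s).summable.norm
  rw [(hasSum_pow_div_factorial s).tsum_eq] at hcauchy
  convert! hcauchy using 1
  · funext n
    rw [laguerrePoly, sum_mul]
    refine sum_congr rfl fun m hm => ?_
    have hGamma_n := (Gamma_natCast_add_add_one_pos hα n).ne'
    rw [← neg_mul, mul_pow, ← pow_mul_pow_sub s (mem_range_succ_iff.1 hm), ← add_assoc]
    field_simp
  · rw [← (hasSum_hyp0F1 (α + 1) (-(x * s))).tsum_eq, tsum_mul_left]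
    field_simp

end Hypergeometric

section HardyHille

/-- The `q`-th term of the Hardy–Hille series, the bilinear generating series of the Laguerre
polynomials of parameter `α`. -/
noncomputable def hardyHilleTerm (α x y t : ℝ) (q : ℕ) : ℝ :=
  q.factorial / Gamma (q + α + 1) * laguerrePoly α q x * laguerrePoly α q y * t ^ q

/-- The closed form of the Hardy–Hille series, meant for `-1 < α` and `|t| < 1`. The Bessel
function of the classical formula is written with `₀F₁`, so that no fractional power of `x * y * t`
occurs and all real `x`, `y`, `t` are allowed. -/
noncomputable def hardyHilleKernel (α x y t : ℝ) : ℝ :=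
  (1 - t) ^ (-(α + 1)) * exp (-((x + y) * (t / (1 - t)))) *
    hyp0F1 (α + 1) (x * y * t / (1 - t) ^ 2) / Gamma (α + 1)

variable {α γ t : ℝ}

lemma abs_hardyHilleTerm_le (hα : -1 < α) (x y t : ℝ) (q : ℕ) :
    |hardyHilleTerm α x y t q| ≤ hardyHilleTerm α (-|x|) (-|y|) |t| q := by
  have hGamma := Gamma_natCast_add_add_one_pos hα q
  have hx := abs_laguerrePoly_le hα q x
  have hy := abs_laguerrePoly_le hα q y
  have hx' := (abs_nonneg _).trans hx
  simp only [hardyHilleTerm, abs_mul, abs_div, abs_pow, Nat.abs_cast, abs_of_pos hGamma]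
  gcongr

lemma hasSum_laguerrePoly_div_one_sub_mul_pow_div_Gamma (hα : -1 < α) (ht : |t| < 1) (x y : ℝ) :
    HasSum (fun n : ℕ => (-y) ^ n / Gamma (n + α + 1) *
        ((1 - t) ^ (-(α + 1)) * exp (-(x * (t / (1 - t)))) *
          (laguerrePoly α n (x / (1 - t)) * (t / (1 - t)) ^ n)))
      (hardyHilleKernel α x y t) := by
  have ht' : 1 - t ≠ 0 := by linarith [(abs_lt.1 ht).2]
  have hargument : -(x / (1 - t) * (-y * (t / (1 - t)))) = x * y * t / (1 - t) ^ 2 := by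
    field_simp
  have hexponent : -((x + y) * (t / (1 - t))) = -(x * (t / (1 - t))) + -y * (t / (1 - t)) := by
    ring
  convert! (hasSum_laguerrePoly_mul_pow_div_Gamma hα (x / (1 - t)) (-y * (t / (1 - t)))).mul_left
    ((1 - t) ^ (-(α + 1)) * exp (-(x * (t / (1 - t))))) using 1
  · funext n
    rw [mul_pow]
    ring
  · rw [hardyHilleKernel, hargument, hexponent, exp_add]
    ring

lemma hasSum_hardyHilleTerm (hα : -1 < α) (ht : |t| < 1) (x y : ℝ) :
    HasSum (hardyHilleTerm α x y t) (hardyHilleKernel α x y t) := by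
  have ht_abs : |(|t|)| < 1 := by rwa [abs_abs]
  refine hasSum_comm_of_norm_le
    (f := fun (n : ℕ) q => (-y) ^ n / Gamma (n + α + 1) *
      (q.choose n * (laguerrePoly α q x * t ^ q)))
    (F := fun (n : ℕ) q => (- -|y|) ^ n / Gamma (n + α + 1) *
      (q.choose n * (laguerrePoly α q (-|x|) * |t| ^ q)))
    (fun n q => ?_)
    (fun n => (hasSum_choose_mul_laguerrePoly_mul_pow hα ht_abs (-|x|) n).mul_left _)
    (hasSum_laguerrePoly_div_one_sub_mul_pow_div_Gamma hα ht_abs (-|x|) (-|y|)).summable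
    (fun n => (hasSum_choose_mul_laguerrePoly_mul_pow hα ht x n).mul_left _)
    (hasSum_laguerrePoly_div_one_sub_mul_pow_div_Gamma hα ht x y) fun q => ?_
  · have hGamma := Gamma_natCast_add_add_one_pos hα n
    have hx := abs_laguerrePoly_le hα q x
    simp only [norm_eq_abs, abs_mul, abs_div, abs_pow, abs_neg, neg_neg, Nat.abs_cast,
      abs_of_pos hGamma]
    gcongr
  · have hGamma := (Gamma_natCast_add_add_one_pos hα q).ne'
    convert! (hasSum_laguerrePoly α q y).mul_left
      (q.factorial / Gamma (q + α + 1) * laguerrePoly α q x * t ^ q) using 1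
    · funext n
      field_simp
    · rw [hardyHilleTerm]
      ring

lemma hardyHilleKernel_nonneg {x y : ℝ} (hα : -1 < α) (ht : 0 ≤ t) (ht1 : t < 1)
    (hxy : 0 ≤ x * y) : 0 ≤ hardyHilleKernel α x y t := by
  have hGamma : 0 < Gamma (α + 1) := Gamma_pos_of_pos (by linarith)
  have : 0 < 1 - t := by linarith
  have hhyp : 0 ≤ hyp0F1 (α + 1) (x * y * t / (1 - t) ^ 2) :=
    hyp0F1_nonneg (by linarith) (by positivity)
  rw [hardyHilleKernel]
  positivity

lemma hardyHilleKernel_le_of_le {x y : ℝ} (hγ : -1 < γ) (hγα : γ ≤ α) (ht : 0 ≤ t) (ht1 : t < 1)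
    (hxy : 0 ≤ x * y) :
    hardyHilleKernel α x y t ≤ exp (-((x + y) * (t / (1 - t)))) *
      hyp0F1 (γ + 1) (x * y * t / (1 - t) ^ 2) * ((1 - t) ^ (-(α + 1)) / Gamma (α + 1)) := by
  have hGamma : 0 < Gamma (α + 1) := Gamma_pos_of_pos (by linarith)
  have : 0 < 1 - t := by linarith
  have hhyp : hyp0F1 (α + 1) (x * y * t / (1 - t) ^ 2) ≤
      hyp0F1 (γ + 1) (x * y * t / (1 - t) ^ 2) :=
    hyp0F1_le_of_le (by linarith) (by linarith) (by positivity)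
  calc hardyHilleKernel α x y t = exp (-((x + y) * (t / (1 - t)))) *
        hyp0F1 (α + 1) (x * y * t / (1 - t) ^ 2) * ((1 - t) ^ (-(α + 1)) / Gamma (α + 1)) := by
        rw [hardyHilleKernel]; ring
    _ ≤ _ := by gcongr

variable {ι : Type*} {a b : ι → ℝ}

lemma summable_abs_mul_hardyHilleTerm (hγ : -1 < γ) (hγb : ∀ i, γ ≤ b i) (ht : |t| < 1) (x y : ℝ)
    (ha : Summable fun i => |a i| * ((1 - |t|) ^ (-(b i + 1)) / Gamma (b i + 1))) :
    Summable fun p : ι × ℕ => |a p.1 * hardyHilleTerm (b p.1) x y t p.2| := by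
  have hb : ∀ i, -1 < b i := fun i => hγ.trans_le (hγb i)
  have hxy : 0 ≤ -|x| * -|y| := by rw [neg_mul_neg]; positivity
  refine summable_norm_prod_of_norm_le (f := fun i q => a i * hardyHilleTerm (b i) x y t q)
    (F := fun i q => |a i| * hardyHilleTerm (b i) (-|x|) (-|y|) |t| q) (fun i q => ?_)
    (fun i => (hasSum_hardyHilleTerm (hb i) (by rwa [abs_abs]) (-|x|) (-|y|)).mul_left |a i|) ?_
  · rw [norm_mul]
    exact mul_le_mul_of_nonneg_left (abs_hardyHilleTerm_le (hb i) x y t q) (abs_nonneg _)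
  · refine (ha.mul_left (exp (-((-|x| + -|y|) * (|t| / (1 - |t|)))) *
      hyp0F1 (γ + 1) (-|x| * -|y| * |t| / (1 - |t|) ^ 2))).of_nonneg_of_le
      (fun i => mul_nonneg (abs_nonneg _) (hardyHilleKernel_nonneg (hb i) (abs_nonneg t) ht hxy))
      fun i => ?_
    rw [mul_left_comm]
    exact mul_le_mul_of_nonneg_left
      (hardyHilleKernel_le_of_le hγ (hγb i) (abs_nonneg t) ht hxy) (abs_nonneg _)

lemma hasSum_mul_hardyHilleKernel (hγ : -1 < γ) (hγb : ∀ i, γ ≤ b i) (ht : |t| < 1) (x y : ℝ)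
    (ha : Summable fun i => |a i| * ((1 - |t|) ^ (-(b i + 1)) / Gamma (b i + 1))) :
    HasSum (fun i => a i * hardyHilleKernel (b i) x y t)
      (∑' p : ι × ℕ, a p.1 * hardyHilleTerm (b p.1) x y t p.2) :=
  (summable_abs_mul_hardyHilleTerm hγ hγb ht x y ha).of_abs.hasSum.prod_fiberwise fun i =>
    (hasSum_hardyHilleTerm (hγ.trans_le (hγb i)) ht x y).mul_left (a i)

lemma summable_abs_mul_rpow_div_Gamma {C M d : ℝ} {n : ι → ℕ} (hn : Function.Injective n)
    (hγ : -1 < γ) (hb : ∀ i, b i = n i + γ) (hd : 0 < d) (ha : ∀ i, |a i| ≤ C * M ^ n i) :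
    Summable fun i => |a i| * (d ^ (-(b i + 1)) / Gamma (b i + 1)) := by
  have hcast : ∀ i, b i + 1 = n i + γ + 1 := fun i => by rw [hb]
  have hGamma : ∀ i, 0 < Gamma (b i + 1) := fun i => by
    rw [hcast]; exact Gamma_natCast_add_add_one_pos hγ (n i)
  refine (((summable_pow_div_Gamma (γ + 1) (M / d)).comp_injective hn).mul_left
    (C * d ^ (-(γ + 1)))).of_nonneg_of_le (fun i => ?_) fun i => ?_
  · have := hGamma i
    positivity
  · have hpow : d ^ (-(b i + 1)) = d ^ (-(γ + 1)) / d ^ n i := by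
      rw [hcast, ← rpow_natCast, ← rpow_sub hd]
      ring_nf
    have := hGamma i
    calc |a i| * (d ^ (-(b i + 1)) / Gamma (b i + 1))
        ≤ C * M ^ n i * (d ^ (-(b i + 1)) / Gamma (b i + 1)) := by
          gcongr
          exact ha i
      _ = C * d ^ (-(γ + 1)) * ((M / d) ^ n i / Gamma (n i + (γ + 1))) := by
          rw [hpow, hcast, add_assoc, div_pow]
          ring

end HardyHille

section Jacobi

lemma abs_Gamma_div_Gamma_mul_factorial_sub_le {α : ℝ} (hα : -1 < α) {s j : ℕ} (hs : s ≤ j) :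
    |Gamma (j + α + 1) / (Gamma (s + α + 1) * (j - s).factorial)| ≤ 2 ^ (j + α + 1) := by
  have hpos : 0 < (s : ℝ) + α + 1 := by linarith [s.cast_nonneg (α := ℝ)]
  have hsplit : ((j - s : ℕ) : ℝ) + (s + α + 1) = j + α + 1 := by
    rw [Nat.cast_sub hs]; ring
  have := Gamma_natCast_add_add_one_pos hα j
  have := Gamma_natCast_add_add_one_pos hα s
  rw [abs_of_pos (by positivity)]
  simpa only [hsplit] using Gamma_div_Gamma_mul_factorial_le hpos (j - s)

lemma abs_jacobiPoly_le {α β x : ℝ} (hα : -1 < α) (hβ : -1 < β) (hx : x ∈ Set.Icc (-1) 1)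
    (j : ℕ) : |jacobiPoly α β j x| ≤ 2 ^ (α + β + 2) * 4 ^ j := by
  have hx₁ : 0 ≤ (1 - x) / 2 := by linarith [hx.2]
  have hx₂ : 0 ≤ (x + 1) / 2 := by linarith [hx.1]
  have hbinom : ∑ s ∈ range (j + 1),
      ((1 - x) / 2) ^ s * ((x + 1) / 2) ^ (j - s) * j.choose s = 1 := by
    rw [← add_pow, ← add_div, add_comm x, sub_add_add_cancel, one_add_one_eq_two,
      div_self two_ne_zero, one_pow]
  have hpow : (2 : ℝ) ^ (j + α + 1) * 2 ^ (j + β + 1) = 2 ^ (α + β + 2) * 4 ^ j := by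
    rw [show (4 : ℝ) = 2 ^ 2 by norm_num, ← pow_mul, ← rpow_natCast, ← rpow_add two_pos,
      ← rpow_add two_pos]
    push_cast
    ring_nf
  calc |jacobiPoly α β j x| ≤ ∑ s ∈ range (j + 1), 2 ^ (j + α + 1) * 2 ^ (j + β + 1) *
        (((1 - x) / 2) ^ s * ((x + 1) / 2) ^ (j - s) * j.choose s) :=
        (abs_sum_le_sum_abs _ _).trans (sum_le_sum fun s hs => ?_)
    _ = 2 ^ (α + β + 2) * 4 ^ j := by rw [← mul_sum, hbinom, hpow, mul_one]
  have hsj : s ≤ j := mem_range_succ_iff.1 hs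
  have hcoeff_α := abs_Gamma_div_Gamma_mul_factorial_sub_le hα hsj
  have hcoeff_β := abs_Gamma_div_Gamma_mul_factorial_sub_le hβ (j.sub_le s)
  rw [Nat.sub_sub_self hsj, Nat.cast_sub hsj] at hcoeff_β
  calc _ ≤ 2 ^ (j + α + 1) * 2 ^ (j + β + 1) * ((1 - x) / 2) ^ s * ((x + 1) / 2) ^ (j - s) := by
        rw [abs_mul, abs_mul, abs_mul, abs_pow, abs_pow, abs_of_nonneg hx₂, ← neg_sub 1 x, neg_div,
          abs_neg, abs_of_nonneg hx₁]
        gcongr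
    _ ≤ 2 ^ (j + α + 1) * 2 ^ (j + β + 1) * ((1 - x) / 2) ^ s * ((x + 1) / 2) ^ (j - s) *
        j.choose s := le_mul_of_one_le_right (by positivity) (mod_cast Nat.choose_pos hsj)
    _ = _ := by ring

end Jacobi

section MehlerIdentity

variable {p : ℕ} {γ z : ℝ}

lemma pow_mul_hardyHilleKernel (hz : |z| < 1) {b : ℝ} {j : ℕ} (hb : b = 2 * j * p + γ) (ρ r : ℝ) :
    (ρ * r / 2 * z) ^ (2 * j * p) * hardyHilleKernel (b) (ρ ^ 2 / 2) (r ^ 2 / 2) (z ^ 2) =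
      (1 - z ^ 2) ^ (-γ - 1) * exp (-(z ^ 2 * (ρ ^ 2 + r ^ 2)) / (2 * (1 - z ^ 2))) *
        (1 / Gamma (b + 1) * (z * ρ * r / (2 * (1 - z ^ 2))) ^ (2 * j * p) *
          hyp0F1 (b + 1) (z ^ 2 * ρ ^ 2 * r ^ 2 / (4 * (1 - z ^ 2) ^ 2))) := by
  have hz2 : 0 < 1 - z ^ 2 := by linarith [(sq_lt_one_iff_abs_lt_one z).2 hz]
  have hrpow : (1 - z ^ 2) ^ (-(b + 1)) = (1 - z ^ 2) ^ (-γ - 1) / (1 - z ^ 2) ^ (2 * j * p) := by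
    rw [← rpow_sub_natCast hz2.ne', hb]
    push_cast
    ring_nf
  have hpow : (z * ρ * r / (2 * (1 - z ^ 2))) ^ (2 * j * p) =
      (ρ * r / 2 * z) ^ (2 * j * p) / (1 - z ^ 2) ^ (2 * j * p) := by
    rw [← div_pow]
    field_simp
  have hexponent : -((ρ ^ 2 / 2 + r ^ 2 / 2) * (z ^ 2 / (1 - z ^ 2))) =
      -(z ^ 2 * (ρ ^ 2 + r ^ 2)) / (2 * (1 - z ^ 2)) := by
    field_simp
  have hargument : ρ ^ 2 / 2 * (r ^ 2 / 2) * z ^ 2 / (1 - z ^ 2) ^ 2 =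
      z ^ 2 * ρ ^ 2 * r ^ 2 / (4 * (1 - z ^ 2) ^ 2) := by
    field_simp
    ring
  rw [hardyHilleKernel, hrpow, hpow, hexponent, hargument]
  ring

/-- The weight with which the Hardy–Hille series of parameter `b j` enters the Mehler-type
expansion; `X`, `Y` are the cosines of the angles and `w` is `ρ * r / 2 * z`. -/
noncomputable def jacobiWeight (p : ℕ) (α β X Y w : ℝ) (j : ℕ) : ℝ :=
  jacobiPoly α β j X * jacobiPoly α β j Y * w ^ (2 * j * p)

variable {α β X Y : ℝ} {b : ℕ → ℝ}

lemma abs_jacobiWeight_le (hp : 1 ≤ p) (hα : -1 < α) (hβ : -1 < β) (hX : X ∈ Set.Icc (-1) 1)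
    (hY : Y ∈ Set.Icc (-1) 1) (w : ℝ) (j : ℕ) :
    |jacobiWeight p α β X Y w j| ≤ (2 ^ (α + β + 2)) ^ 2 * (4 * |w|) ^ (2 * j * p) := by
  have hpow : (4 : ℝ) ^ (2 * j) ≤ 4 ^ (2 * j * p) :=
    pow_le_pow_right₀ (by norm_num) (Nat.le_mul_of_pos_right _ hp)
  calc |jacobiWeight p α β X Y w j|
      ≤ 2 ^ (α + β + 2) * 4 ^ j * (2 ^ (α + β + 2) * 4 ^ j) * |w| ^ (2 * j * p) := by
        rw [jacobiWeight, abs_mul, abs_mul, abs_pow]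
        gcongr
        exacts [abs_jacobiPoly_le hα hβ hX j, abs_jacobiPoly_le hα hβ hY j]
    _ = (2 ^ (α + β + 2)) ^ 2 * (4 ^ (2 * j) * |w| ^ (2 * j * p)) := by ring
    _ ≤ (2 ^ (α + β + 2)) ^ 2 * (4 * |w|) ^ (2 * j * p) := by rw [mul_pow]; gcongr

lemma summable_abs_jacobiWeight_mul_rpow_div_Gamma (hp : 1 ≤ p) (hα : -1 < α) (hβ : -1 < β)
    (hγ : -1 < γ) (hb : ∀ j : ℕ, b j = 2 * j * p + γ) (hX : X ∈ Set.Icc (-1) 1)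
    (hY : Y ∈ Set.Icc (-1) 1) (w : ℝ) {d : ℝ} (hd : 0 < d) :
    Summable fun j => |jacobiWeight p α β X Y w j| * (d ^ (-(b j + 1)) / Gamma (b j + 1)) :=
  summable_abs_mul_rpow_div_Gamma
    (fun i j hij => by simpa [(zero_lt_one.trans_le hp).ne'] using hij) hγ
    (fun j => by rw [hb]; push_cast; rfl) hd (abs_jacobiWeight_le hp hα hβ hX hY w)

theorem stmt_12_general {ρ r : ℝ} (hp : 1 ≤ p) (hα : -1 < α) (hβ : -1 < β) (hγ : -1 < γ)
    (hb : ∀ j : ℕ, b j = 2 * j * p + γ) (hz : |z| < 1)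
    (hX : X ∈ Set.Icc (-1) 1) (hY : Y ∈ Set.Icc (-1) 1) {T : ℕ × ℕ → ℝ}
    (hT : ∀ j q : ℕ, T (j, q) = q.factorial / Gamma (b j + q + 1)
      * laguerrePoly (b j) q (ρ ^ 2 / 2) * laguerrePoly (b j) q (r ^ 2 / 2)
      * jacobiPoly α β j X * jacobiPoly α β j Y
      * (ρ * r / 2) ^ (2 * j * p) * z ^ (2 * (q + j * p)))
    {S : ℕ → ℝ}
    (hS : ∀ j : ℕ, S j = 1 / Gamma (b j + 1) * (z * ρ * r / (2 * (1 - z ^ 2))) ^ (2 * j * p)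
      * hyp0F1 (b j + 1) (z ^ 2 * ρ ^ 2 * r ^ 2 / (4 * (1 - z ^ 2) ^ 2))
      * jacobiPoly α β j X * jacobiPoly α β j Y) :
    Summable (fun x : ℕ × ℕ => |T x|) ∧ Summable (fun j : ℕ => |S j|)
    ∧ ∑' x : ℕ × ℕ, T x
        = (1 - z ^ 2) ^ (-γ - 1) * exp (-(z ^ 2 * (ρ ^ 2 + r ^ 2)) / (2 * (1 - z ^ 2)))
            * ∑' j : ℕ, S j := by
  have hz2 : |z ^ 2| < 1 := by rwa [abs_sq, sq_lt_one_iff_abs_lt_one]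
  have hz2_pos : 0 < 1 - z ^ 2 := by linarith [(abs_lt.1 hz2).2]
  have hγb : ∀ j, γ ≤ b j := fun j => by rw [hb]; exact le_add_of_nonneg_left (by positivity)
  have hweight := summable_abs_jacobiWeight_mul_rpow_div_Gamma hp hα hβ hγ hb hX hY
    (ρ * r / 2 * z) (sub_pos.2 hz2)
  obtain rfl : T = fun x => jacobiWeight p α β X Y (ρ * r / 2 * z) x.1 *
      hardyHilleTerm (b x.1) (ρ ^ 2 / 2) (r ^ 2 / 2) (z ^ 2) x.2 := by
    funext ⟨j, q⟩
    rw [hT, jacobiWeight, hardyHilleTerm, add_comm (b j)]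
    ring
  have hS_kernel : ∀ j, jacobiWeight p α β X Y (ρ * r / 2 * z) j *
      hardyHilleKernel (b j) (ρ ^ 2 / 2) (r ^ 2 / 2) (z ^ 2) =
      (1 - z ^ 2) ^ (-γ - 1) * exp (-(z ^ 2 * (ρ ^ 2 + r ^ 2)) / (2 * (1 - z ^ 2))) * S j := by
    intro j
    rw [jacobiWeight, mul_assoc, pow_mul_hardyHilleKernel hz (hb j), hS]
    ring
  have hsum := hasSum_mul_hardyHilleKernel hγ hγb hz2 (ρ ^ 2 / 2) (r ^ 2 / 2) hweight
  simp only [hS_kernel] at hsum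
  refine ⟨summable_abs_mul_hardyHilleTerm hγ hγb hz2 _ _ hweight,
    ((summable_mul_left_iff (by positivity)).1 hsum.summable).abs, ?_⟩
  rw [← tsum_mul_left, hsum.tsum_eq]

end MehlerIdentity

/-- Mehler-type generating identity for the `W`-invariant generalized
Hermite polynomials of the even dihedral system `I₂(2p)`: with `γ = p(k₀+k₁)`,
`b_j = 2jp + γ`, `z ∈ (0,1)`, `ρ, r ≥ 0`, `φ, θ ∈ [0, π/(2p)]`, the double series
`∑_{j,q} [q!/Γ(b_j+q+1)] L_q^{(b_j)}(ρ²/2) L_q^{(b_j)}(r²/2)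
  P_j(cos 2pφ) P_j(cos 2pθ) (ρr/2)^{2jp} z^{2(q+jp)}` (with `P_j = P_j^{(k₀−1/2,k₁−1/2)}`)
converges absolutely and equals
`(1−z²)^{−γ−1} e^{−z²(ρ²+r²)/(2(1−z²))} ∑_j [1/Γ(b_j+1)] (zρr/(2(1−z²)))^{2jp}
  ₀F₁(b_j+1; z²ρ²r²/(4(1−z²)²)) P_j(cos 2pφ) P_j(cos 2pθ)`,
the latter series also converging absolutely. -/
theorem stmt_12 (p : ℕ) (hp : 1 ≤ p) (k₀ k₁ : ℝ) (hk₀ : 0 ≤ k₀) (hk₁ : 0 ≤ k₁)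
    (γ : ℝ) (hγ : γ = p * (k₀ + k₁)) (b : ℕ → ℝ) (hb : ∀ j : ℕ, b j = 2 * j * p + γ)
    (z : ℝ) (hz : z ∈ Set.Ioo (0 : ℝ) 1) (ρ r φ θ : ℝ) (hρ : 0 ≤ ρ) (hr : 0 ≤ r)
    (hφ : φ ∈ Set.Icc 0 (π / (2 * p))) (hθ : θ ∈ Set.Icc 0 (π / (2 * p)))
    (T : ℕ × ℕ → ℝ)
    (hT : ∀ j q : ℕ, T (j, q)
      = (Nat.factorial q / Real.Gamma (b j + q + 1))
          * laguerrePoly (b j) q (ρ ^ 2 / 2) * laguerrePoly (b j) q (r ^ 2 / 2)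
          * jacobiPoly (k₀ - 1 / 2) (k₁ - 1 / 2) j (Real.cos (2 * p * φ))
          * jacobiPoly (k₀ - 1 / 2) (k₁ - 1 / 2) j (Real.cos (2 * p * θ))
          * (ρ * r / 2) ^ (2 * j * p) * z ^ (2 * (q + j * p)))
    (S : ℕ → ℝ)
    (hS : ∀ j : ℕ, S j
      = (1 / Real.Gamma (b j + 1)) * (z * ρ * r / (2 * (1 - z ^ 2))) ^ (2 * j * p)
          * hyp0F1 (b j + 1) (z ^ 2 * ρ ^ 2 * r ^ 2 / (4 * (1 - z ^ 2) ^ 2))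
          * jacobiPoly (k₀ - 1 / 2) (k₁ - 1 / 2) j (Real.cos (2 * p * φ))
          * jacobiPoly (k₀ - 1 / 2) (k₁ - 1 / 2) j (Real.cos (2 * p * θ))) :
    Summable (fun x : ℕ × ℕ => |T x|) ∧ Summable (fun j : ℕ => |S j|)
    ∧ ∑' x : ℕ × ℕ, T x
        = (1 - z ^ 2) ^ (-γ - 1) * Real.exp (-(z ^ 2 * (ρ ^ 2 + r ^ 2)) / (2 * (1 - z ^ 2)))
            * ∑' j : ℕ, S j := by
  have hγ_nonneg : 0 ≤ γ := by rw [hγ]; positivity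
  exact stmt_12_general hp (by linarith) (by linarith) (by linarith) hb
    (abs_lt.2 ⟨by linarith [hz.1], hz.2⟩) ⟨neg_one_le_cos _, cos_le_one _⟩
    ⟨neg_one_le_cos _, cos_le_one _⟩ hT hS
end
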